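/- arXiv:2405.04709 — 9 statements merged into one kernel-verified Lean document; each statement's English description precedes it below -/
import Mathlib

section
/- Let R be a ring and X a chain complex of left R-modules with a filtration (F^p)_{p∈ℤ}. Then for every r ≥ 1 and all p, q ∈ ℤ, one has I^r_{p,q} ∩ (∂_{p+q})^{−1}(J^r_{p−r,q+r−1} + I^{r−1}_{p−r−1,q+r}) = I^{r+1}_{p,q} + I^{r−1}_{p−1,q+1}; that is, the set of x ∈ I^r_{p,q} with ∂_{p+q}(x) ∈ J^r_{p−r,q+r−1} + I^{r−1}_{p−r−1,q+r} is exactly I^{r+1}_{p,q} + I^{r−1}_{p−1,q+1}. -/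
open Submodule

variable {R : Type*} [Ring R]

section FiltrationSetup

variable (X : ℤ → Type*) [∀ n, AddCommGroup (X n)] [∀ n, Module R (X n)]

/-- The submodule `I^r_{p,q}` of `X_n` (where `n = p + q`):
`I^r_{p,q} = (∂_n)⁻¹(F^{p−r}_{n−1}) ∩ F^p_n`. -/
def filtI (d : ∀ i j : ℤ, X i →ₗ[R] X j) (F : ℤ → ∀ n : ℤ, Submodule R (X n))
    (r p n : ℤ) : Submodule R (X n) :=
  Submodule.comap (d n (n - 1)) (F (p - r) (n - 1)) ⊓ F p n

/-- The submodule `J^r_{p,q}` of `X_n` (where `n = p + q`):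
`J^r_{p,q} = ∂_{n+1}(F^{p+r−1}_{n+1}) ∩ F^p_n`. -/
def filtJ (d : ∀ i j : ℤ, X i →ₗ[R] X j) (F : ℤ → ∀ n : ℤ, Submodule R (X n))
    (r p n : ℤ) : Submodule R (X n) :=
  Submodule.map (d (n + 1) n) (F (p + r - 1) (n + 1)) ⊓ F p n

end FiltrationSetup

/-- Membership in `J^r_{p,q}`, with the source of the differential written in degree `n`. -/
theorem mem_filtJ_sub_one (X : ℤ → Type*) [∀ n, AddCommGroup (X n)] [∀ n, Module R (X n)]
    (d : ∀ i j : ℤ, X i →ₗ[R] X j) (F : ℤ → ∀ n : ℤ, Submodule R (X n))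
    (r p n : ℤ) (x : X (n - 1)) :
    x ∈ filtJ X d F r p (n - 1) ↔ (∃ y ∈ F (p + r - 1) n, d n (n - 1) y = x) ∧ x ∈ F p (n - 1) := by
  have map_eq : ∀ m, m = n →
      Submodule.map (d m (n - 1)) (F (p + r - 1) m)
        = Submodule.map (d n (n - 1)) (F (p + r - 1) n) := by
    rintro m rfl
    rfl
  rw [filtJ, map_eq _ (sub_add_cancel n 1), Submodule.mem_inf, Submodule.mem_map]

/-- Let `R` be a ring and `X` a chain complex of left `R`-modules with a
filtration `(F p)ₚ` by subcomplexes.  Then for every `r ≥ 1` and all `p q : ℤ`,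
`I^r_{p,q} ∩ (∂_{p+q})⁻¹(J^r_{p−r,q+r−1} + I^{r−1}_{p−r−1,q+r}) = I^{r+1}_{p,q} + I^{r−1}_{p−1,q+1}`
as submodules of `X_{p+q}`.  (The terms `J^r_{p−r,q+r−1}` and `I^{r−1}_{p−r−1,q+r}` live in
degree `p+q−1`, and `I^{r−1}_{p−1,q+1}` in degree `p+q`.) -/
theorem filtI_inter_preimage_eq
    (X : ℤ → Type*) [∀ n, AddCommGroup (X n)] [∀ n, Module R (X n)]
    (d : ∀ i j : ℤ, X i →ₗ[R] X j)
    (hshape : ∀ i j : ℤ, j ≠ i - 1 → d i j = 0)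
    (hdd : ∀ i j k : ℤ, ∀ x : X i, d j k (d i j x) = 0)
    (F : ℤ → ∀ n : ℤ, Submodule R (X n))
    (hmono : ∀ p n : ℤ, F (p - 1) n ≤ F p n)
    (hsub : ∀ p i j : ℤ, ∀ x : X i, x ∈ F p i → d i j x ∈ F p j)
    (r : ℤ) (hr : 1 ≤ r) (p q : ℤ) :
    filtI X d F r p (p + q) ⊓
        Submodule.comap (d (p + q) (p + q - 1))
          (filtJ X d F r (p - r) (p + q - 1) ⊔ filtI X d F (r - 1) (p - r - 1) (p + q - 1))
      = filtI X d F (r + 1) p (p + q) ⊔ filtI X d F (r - 1) (p - 1) (p + q) := by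
  have hindex : p - 1 - (r - 1) = p - r := by ring
  have hindex' : p - r + r - 1 = p - 1 := by ring
  have hindex'' : p - (r + 1) = p - r - 1 := by ring
  apply le_antisymm
  · rintro x ⟨⟨-, hx⟩, hdx⟩
    obtain ⟨j, hj, i, hi, hji⟩ := Submodule.mem_sup.mp (Submodule.mem_comap.mp hdx)
    obtain ⟨⟨y, hy, rfl⟩, hdy⟩ := (mem_filtJ_sub_one X d F _ _ _ _).mp hj
    rw [hindex'] at hy
    refine Submodule.mem_sup.mpr ⟨x - y, ⟨?_, sub_mem hx (hmono p _ hy)⟩, y, ⟨?_, hy⟩,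
      sub_add_cancel x y⟩
    · have hd : d (p + q) (p + q - 1) (x - y) = i := by
        rw [map_sub, ← hji, add_sub_cancel_left]
      change d (p + q) (p + q - 1) (x - y) ∈ F (p - (r + 1)) (p + q - 1)
      rw [hd, hindex'']
      exact hi.2
    · change d (p + q) (p + q - 1) y ∈ F (p - 1 - (r - 1)) (p + q - 1)
      rwa [hindex]
  · refine sup_le ?_ ?_
    · rintro x ⟨hdx, hx⟩
      rw [hindex''] at hdx
      refine ⟨⟨hmono (p - r) _ hdx, hx⟩, Submodule.mem_sup_right ⟨?_, hdx⟩⟩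
      rw [SetLike.mem_coe, Submodule.mem_comap, hdd]
      exact zero_mem _
    · rintro y ⟨hdy, hy⟩
      rw [hindex] at hdy
      refine ⟨⟨hdy, hmono p _ hy⟩, Submodule.mem_sup_left ?_⟩
      refine (mem_filtJ_sub_one X d F _ _ _ _).mpr ⟨⟨y, ?_, rfl⟩, hdy⟩
      rwa [hindex']
end

section
/- Let R be a ring and X a chain complex of left R-modules with a filtration (F^p)_{p∈ℤ}. Then for all p, q ∈ ℤ there is an isomorphism of R-modules H_{p+q}(F^p/F^{p−1}) ≅ I^1_{p,q}/(J^1_{p,q} + F^{p−1}_{p+q}), where F^p/F^{p−1} is the quotient chain complex; here J^1_{p,q} + F^{p−1}_{p+q} ⊆ I^1_{p,q}, so the right-hand quotient is well defined. -/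
open Submodule

variable {R : Type*} [Ring R]

section FiltrationSetup

variable (X : ℤ → Type*) [∀ n, AddCommGroup (X n)] [∀ n, Module R (X n)]

/-- The `m`-th homology of a ℤ-indexed complex `(Y, e)` (with the homological-complex
convention `e i j : Y i →ₗ Y j`, nonzero only for `j = i − 1`):
`H_m = Ker(e m (m−1)) / Im(e (m+1) m)`. -/
abbrev homologyAt (Y : ℤ → Type*) [∀ n, AddCommGroup (Y n)] [∀ n, Module R (Y n)]
    (e : ∀ i j : ℤ, Y i →ₗ[R] Y j) (m : ℤ) :=
  ↥(LinearMap.ker (e m (m - 1))) ⧸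
    Submodule.comap (LinearMap.ker (e m (m - 1))).subtype (LinearMap.range (e (m + 1) m))

/-- The degree-`n` term of the quotient complex `F^p/F^{p−1}`. -/
abbrev quotComplexX (F : ℤ → ∀ n : ℤ, Submodule R (X n)) (p n : ℤ) :=
  ↥(F p n) ⧸ Submodule.comap (F p n).subtype (F (p - 1) n)

/-- The differentials of the quotient complex `F^p/F^{p−1}`, induced by those of `X`. -/
def quotComplexD (d : ∀ i j : ℤ, X i →ₗ[R] X j) (F : ℤ → ∀ n : ℤ, Submodule R (X n))
    (hsub : ∀ p i j : ℤ, ∀ x : X i, x ∈ F p i → d i j x ∈ F p j) (p : ℤ)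
    (i j : ℤ) : quotComplexX X F p i →ₗ[R] quotComplexX X F p j :=
  Submodule.mapQ _ _ ((d i j).restrict (fun x hx => hsub p i j x hx))
    (fun x hx => hsub (p - 1) i j x hx)

end FiltrationSetup

section CycleMap

variable {X : ℤ → Type*} [∀ n, AddCommGroup (X n)] [∀ n, Module R (X n)]
  (d : ∀ i j : ℤ, X i →ₗ[R] X j) (F : ℤ → ∀ n : ℤ, Submodule R (X n))
  (hsub : ∀ p i j : ℤ, ∀ x : X i, x ∈ F p i → d i j x ∈ F p j)

/-- The map sending an element of `I¹` to the cycle it represents in `F^p/F^{p−1}`. -/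
def filtIToCycles (p n : ℤ) :
    filtI X d F 1 p n →ₗ[R] LinearMap.ker (quotComplexD X d F hsub p n (n - 1)) :=
  LinearMap.codRestrict _
    ((Submodule.mkQ (Submodule.comap (F p n).subtype (F (p - 1) n))).comp
      (Submodule.inclusion inf_le_right))
    (fun x => (Submodule.Quotient.mk_eq_zero _).2 x.2.1)

theorem filtIToCycles_surjective (p n : ℤ) :
    Function.Surjective (filtIToCycles d F hsub p n) := by
  rintro ⟨y, hy⟩
  obtain ⟨x, rfl⟩ := Submodule.Quotient.mk_surjective _ y
  have h : d n (n - 1) x ∈ F (p - 1) (n - 1) := (Submodule.Quotient.mk_eq_zero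
    (Submodule.comap (F p (n - 1)).subtype (F (p - 1) (n - 1)))).1 hy
  exact ⟨⟨x, h, x.2⟩, rfl⟩

/-- An element of `I¹` represents a boundary of `F^p/F^{p−1}` exactly when it lies in
`J¹ + F^{p−1}`. -/
theorem filtIToCycles_mem_range_iff (p n : ℤ)
    (x : filtI X d F 1 p n) :
    (filtIToCycles d F hsub p n x : quotComplexX X F p n) ∈
        LinearMap.range (quotComplexD X d F hsub p (n + 1) n) ↔
      (x : X n) ∈ filtJ X d F 1 p n ⊔ F (p - 1) n := by
  rw [filtJ, add_sub_cancel_right, Submodule.mem_sup]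
  constructor
  · rintro ⟨y, hy⟩
    obtain ⟨z, rfl⟩ := Submodule.Quotient.mk_surjective _ y
    have h : d (n + 1) n z - x ∈ F (p - 1) n :=
      (Submodule.Quotient.eq (Submodule.comap (F p n).subtype (F (p - 1) n))).1 hy
    exact ⟨d (n + 1) n z, ⟨⟨z, z.2, rfl⟩, hsub p _ _ _ z.2⟩, x - d (n + 1) n z,
      by simpa using neg_mem h, by abel⟩
  · rintro ⟨_, ⟨⟨z, hz, rfl⟩, _⟩, w, hw, hx⟩
    refine ⟨Submodule.Quotient.mk ⟨z, hz⟩, (Submodule.Quotient.eq _).2 ?_⟩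
    change d (n + 1) n z - x ∈ F (p - 1) n
    rw [← hx]
    simpa using hw

end CycleMap

/-- Let `R` be a ring and `X` a chain complex of left `R`-modules with a
filtration `(F p)ₚ` by subcomplexes.  Then for all `p q : ℤ` there is an isomorphism of
`R`-modules `H_{p+q}(F^p/F^{p−1}) ≅ I¹_{p,q}/(J¹_{p,q} + F^{p−1}_{p+q})`. -/
theorem homology_quotient_filtration_iso
    (X : ℤ → Type*) [∀ n, AddCommGroup (X n)] [∀ n, Module R (X n)]
    (d : ∀ i j : ℤ, X i →ₗ[R] X j)
    (hshape : ∀ i j : ℤ, j ≠ i - 1 → d i j = 0)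
    (hdd : ∀ i j k : ℤ, ∀ x : X i, d j k (d i j x) = 0)
    (F : ℤ → ∀ n : ℤ, Submodule R (X n))
    (hmono : ∀ p n : ℤ, F (p - 1) n ≤ F p n)
    (hsub : ∀ p i j : ℤ, ∀ x : X i, x ∈ F p i → d i j x ∈ F p j)
    (p q : ℤ) :
    Nonempty
      (homologyAt (quotComplexX X F p) (quotComplexD X d F hsub p) (p + q) ≃ₗ[R]
        ↥(filtI X d F 1 p (p + q)) ⧸
          Submodule.comap (filtI X d F 1 p (p + q)).subtype
            (filtJ X d F 1 p (p + q) ⊔ F (p - 1) (p + q))) := by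
  let cycles := filtIToCycles d F hsub p (p + q)
  let boundaries := Submodule.comap
    (LinearMap.ker (quotComplexD X d F hsub p (p + q) (p + q - 1))).subtype
    (LinearMap.range (quotComplexD X d F hsub p (p + q + 1) (p + q)))
  have hker : LinearMap.ker (boundaries.mkQ.comp cycles) =
      Submodule.comap (filtI X d F 1 p (p + q)).subtype
        (filtJ X d F 1 p (p + q) ⊔ F (p - 1) (p + q)) := by
    ext x
    rw [LinearMap.ker_comp, Submodule.ker_mkQ]
    exact filtIToCycles_mem_range_iff d F hsub p (p + q) x
  have hsurj : Function.Surjective (boundaries.mkQ.comp cycles) :=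
    boundaries.mkQ_surjective.comp (filtIToCycles_surjective d F hsub p (p + q))
  exact ⟨((Submodule.quotEquivOfEq _ _ hker.symm).trans
    (LinearMap.quotKerEquivOfSurjective _ hsurj)).symm⟩
end

section
/- Let R be a commutative ring and (a_α)_{α∈Φ} a family of elements of R such that any finitely many pairwise distinct members of the family form a regular sequence on R in some order, and let 𝔞 be the ideal generated by the a_α. Then for every s ≥ 1 there is an isomorphism of R/𝔞-modules Sym^s_{R/𝔞}(𝔞/𝔞²) ≅ 𝔞^s/𝔞^{s+1} sending the product (a₁+𝔞²)·…·(a_s+𝔞²) to a₁⋯a_s + 𝔞^{s+1} for all a₁,…,a_s ∈ 𝔞. -/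
open scoped TensorProduct

/-- The `s`-th symmetric power of a `k`-module `M`: the quotient of the `s`-fold tensor power
`M^{⊗s}` by the submodule generated by all `x₁⊗…⊗xₛ − x_{τ(1)}⊗…⊗x_{τ(s)}` for
permutations `τ`. -/
abbrev SymPow (k : Type*) [CommRing k] (M : Type*) [AddCommGroup M] [Module k M]
    (s : ℕ) :=
  (⨂[k]^s M) ⧸ Submodule.span k
    {z : ⨂[k]^s M | ∃ (x : Fin s → M) (τ : Equiv.Perm (Fin s)),
      z = PiTensorProduct.tprod k x - PiTensorProduct.tprod k (x ∘ τ)}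

namespace MvPolynomial

variable {R : Type*} [CommRing R] {σ : Type*}

/-- The homogeneous polynomials of degree `n` that only involve the variables in `T`. -/
noncomputable def homogeneousSupported (R : Type*) [CommRing R] {σ : Type*} (T : Set σ) (n : ℕ) :
    Submodule R (MvPolynomial σ R) :=
  restrictSupport R {m | m.degree = n ∧ ∀ i, m i ≠ 0 → i ∈ T}

lemma mem_homogeneousSupported {T : Set σ} {n : ℕ} {F : MvPolynomial σ R} :
    F ∈ homogeneousSupported R T n ↔
      ∀ m, coeff m F ≠ 0 → m.degree = n ∧ ∀ i, m i ≠ 0 → i ∈ T := by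
  simp only [homogeneousSupported, mem_restrictSupport_iff, Set.subset_def, Finset.mem_coe,
    mem_support_iff, Set.mem_ofPred_eq]

lemma homogeneousSupported_mono {S T : Set σ} (h : S ⊆ T) (n : ℕ) :
    homogeneousSupported R S n ≤ homogeneousSupported R T n :=
  restrictSupport_mono _ fun _ hm => ⟨hm.1, fun i hi => h (hm.2 i hi)⟩

lemma exists_finset_mem_homogeneousSupported {T : Set σ} {n : ℕ} {F : MvPolynomial σ R}
    (hF : F ∈ homogeneousSupported R T n) :
    ∃ S : Finset σ, F ∈ homogeneousSupported R (S : Set σ) n := by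
  classical
  refine ⟨F.support.biUnion Finsupp.support, mem_homogeneousSupported.2 fun m hm =>
    ⟨(mem_homogeneousSupported.1 hF m hm).1, fun i hi => ?_⟩⟩
  simp only [Finset.coe_biUnion, Set.mem_iUnion, Finset.mem_coe]
  exact ⟨m, mem_support_iff.2 hm, Finsupp.mem_support_iff.2 hi⟩

lemma prod_pow_mem_span_pow (a : σ → R) {T : Set σ} {m : σ →₀ ℕ} (hm : ∀ i, m i ≠ 0 → i ∈ T) :
    (m.prod fun i k => a i ^ k) ∈ Ideal.span (a '' T) ^ m.degree := by
  rw [Finsupp.degree_apply, ← Finset.prod_pow_eq_pow_sum]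
  exact Ideal.prod_mem_prod fun i hi => Ideal.pow_mem_pow
    (Ideal.subset_span (Set.mem_image_of_mem a (hm i (Finsupp.mem_support_iff.1 hi)))) _

lemma eval_mem_mul_span_pow (a : σ → R) {T : Set σ} {n : ℕ} {F : MvPolynomial σ R}
    (hF : F ∈ homogeneousSupported R T n) {I : Ideal R} (hI : ∀ m, coeff m F ∈ I) :
    eval a F ∈ I * Ideal.span (a '' T) ^ n := by
  rw [eval_eq]
  refine Ideal.sum_mem _ fun m hm => Ideal.mul_mem_mul (hI m) ?_
  obtain ⟨rfl, hT⟩ := mem_homogeneousSupported.1 hF m (mem_support_iff.1 hm)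
  exact prod_pow_mem_span_pow a hT

lemma eval_mem_span_pow (a : σ → R) {T : Set σ} {n : ℕ} {F : MvPolynomial σ R}
    (hF : F ∈ homogeneousSupported R T n) :
    eval a F ∈ Ideal.span (a '' T) ^ n := by
  simpa using eval_mem_mul_span_pow a hF (I := ⊤) fun _ => Submodule.mem_top

lemma X_mul_mem_homogeneousSupported {T : Set σ} {n : ℕ} {F : MvPolynomial σ R}
    (hF : F ∈ homogeneousSupported R T n) {i : σ} (hi : i ∈ T) :
    X i * F ∈ homogeneousSupported R T (n + 1) := by
  classical
  rw [mem_homogeneousSupported] at hF ⊢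
  intro m hm
  rw [coeff_X_mul'] at hm
  split_ifs at hm with h
  · obtain ⟨h1, h2⟩ := hF _ hm
    have hle : Finsupp.single i 1 ≤ m := by
      rw [Finsupp.single_le_iff]
      exact Nat.one_le_iff_ne_zero.2 (Finsupp.mem_support_iff.1 h)
    have hadd := tsub_add_cancel_of_le hle
    refine ⟨?_, fun j hj => ?_⟩
    · rw [← hadd, map_add, h1, Finsupp.degree_single]
    · by_cases hij : i = j
      · exact hij ▸ hi
      · exact h2 j (by simpa [Finsupp.single_apply, hij] using hj)
  · exact absurd rfl hm

lemma exists_eval_eq_of_mem_span_pow (a : σ → R) {T : Set σ} {n : ℕ} {y : R}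
    (hy : y ∈ Ideal.span (a '' T) ^ n) :
    ∃ F ∈ homogeneousSupported R T n, eval a F = y := by
  induction n generalizing y with
  | zero =>
    refine ⟨C y, mem_homogeneousSupported.2 fun m hm => ?_, eval_C y⟩
    classical
    rw [coeff_C] at hm
    split_ifs at hm with h
    · subst h; simp
    · exact absurd rfl hm
  | succ n ih =>
    rw [pow_succ'] at hy
    refine Submodule.mul_induction_on hy (fun x hx z hz => ?_) ?_
    · obtain ⟨G, hG, rfl⟩ := ih hz
      refine Submodule.span_induction ?_ ?_ ?_ ?_ hx
      · rintro _ ⟨i, hi, rfl⟩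
        exact ⟨X i * G, X_mul_mem_homogeneousSupported hG hi, by simp⟩
      · exact ⟨0, Submodule.zero_mem _, by simp⟩
      · rintro _ _ _ _ ⟨F, hF, h⟩ ⟨F', hF', h'⟩
        exact ⟨F + F', Submodule.add_mem _ hF hF', by rw [map_add, h, h', add_mul]⟩
      · rintro r _ _ ⟨F, hF, h⟩
        exact ⟨r • F, Submodule.smul_mem _ r hF, by rw [smul_eval, h, smul_eq_mul, mul_assoc]⟩
    · rintro _ _ ⟨F, hF, rfl⟩ ⟨F', hF', rfl⟩
      exact ⟨F + F', Submodule.add_mem _ hF hF', map_add _ _ _⟩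

lemma exists_eval_eq_of_mem_mul_span_pow (a : σ → R) {T : Set σ} {n : ℕ} {I : Ideal R} {y : R}
    (hy : y ∈ I * Ideal.span (a '' T) ^ n) :
    ∃ F ∈ homogeneousSupported R T n, (∀ m, coeff m F ∈ I) ∧ eval a F = y := by
  refine Submodule.mul_induction_on hy (fun x hx z hz => ?_) ?_
  · obtain ⟨G, hG, rfl⟩ := exists_eval_eq_of_mem_span_pow a hz
    exact ⟨x • G, Submodule.smul_mem _ x hG, fun m => by
      rw [coeff_smul]; exact Ideal.mul_mem_right _ _ hx, by simp⟩
  · rintro _ _ ⟨F, hF, hc, rfl⟩ ⟨F', hF', hc', rfl⟩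
    exact ⟨F + F', Submodule.add_mem _ hF hF', fun m => by
      rw [coeff_add]; exact Ideal.add_mem _ (hc m) (hc' m), map_add _ _ _⟩

/-- The family `a` restricted to `T` is quasi-regular: a homogeneous relation among its members
has all its coefficients in the ideal they generate. -/
def IsQuasiRegularOn (a : σ → R) (T : Set σ) : Prop :=
  ∀ n, ∀ F ∈ homogeneousSupported R T n, eval a F = 0 → ∀ m, coeff m F ∈ Ideal.span (a '' T)

lemma coeff_mem_of_eval_mem_pow_succ {a : σ → R} {T : Set σ} {n : ℕ}
    (h : ∀ F ∈ homogeneousSupported R T n, eval a F = 0 → ∀ m, coeff m F ∈ Ideal.span (a '' T))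
    {F : MvPolynomial σ R} (hF : F ∈ homogeneousSupported R T n)
    (hF' : eval a F ∈ Ideal.span (a '' T) ^ (n + 1)) (m : σ →₀ ℕ) :
    coeff m F ∈ Ideal.span (a '' T) := by
  rw [pow_succ'] at hF'
  obtain ⟨G, hG, hGc, hGe⟩ := exists_eval_eq_of_mem_mul_span_pow a hF'
  have := h (F - G) (Submodule.sub_mem _ hF hG) (by rw [map_sub, hGe, sub_self]) m
  rw [coeff_sub] at this
  simpa using Ideal.add_mem _ this (hGc m)

lemma IsQuasiRegularOn.mem_pow_of_mul_mem {a : σ → R} {T : Set σ} (h : IsQuasiRegularOn a T)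
    {x : R} (hx : ∀ y, x * y ∈ Ideal.span (a '' T) → y ∈ Ideal.span (a '' T)) (n : ℕ) {y : R}
    (hy : x * y ∈ Ideal.span (a '' T) ^ n) : y ∈ Ideal.span (a '' T) ^ n := by
  induction n with
  | zero => simp
  | succ n ih =>
    obtain ⟨G, hG, rfl⟩ := exists_eval_eq_of_mem_span_pow a
      (ih (Ideal.pow_le_pow_right n.le_succ hy))
    rw [pow_succ']
    refine eval_mem_mul_span_pow a hG fun m => hx _ ?_
    rw [← smul_eq_mul, ← coeff_smul]
    exact coeff_mem_of_eval_mem_pow_succ (h n) (Submodule.smul_mem _ x hG) (by simpa using hy) m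

lemma coeff_eq_zero_of_eval_eq_zero {a : σ → R} {F : MvPolynomial σ R}
    (h : ∀ m, coeff m F ≠ 0 → m = 0) (hF : eval a F = 0) (m : σ →₀ ℕ) : coeff m F = 0 := by
  have hC : F = C (coeff 0 F) := by
    classical
    ext m
    rw [coeff_C]
    split_ifs with hm
    · rw [hm]
    · by_contra h0
      exact hm (h m h0).symm
  rw [hC, eval_C] at hF
  rw [hC, hF, map_zero, coeff_zero]

lemma isQuasiRegularOn_empty (a : σ → R) : IsQuasiRegularOn a ∅ := by
  intro n F hF h0 m
  rw [coeff_eq_zero_of_eval_eq_zero (fun m hm => ?_) h0 m]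
  · exact Ideal.zero_mem _
  · ext i
    by_contra hi
    exact (mem_homogeneousSupported.1 hF m hm).2 i hi

lemma divMonomial_single_mem_homogeneousSupported {T : Set σ} {n : ℕ} {F : MvPolynomial σ R}
    (hF : F ∈ homogeneousSupported R T (n + 1)) (i : σ) :
    F.divMonomial (Finsupp.single i 1) ∈ homogeneousSupported R T n := by
  rw [mem_homogeneousSupported] at hF ⊢
  intro m hm
  rw [coeff_divMonomial] at hm
  obtain ⟨h1, h2⟩ := hF _ hm
  rw [map_add, Finsupp.degree_single] at h1
  exact ⟨by omega, fun j hj => h2 j (by rw [Finsupp.add_apply]; omega)⟩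

lemma modMonomial_single_mem_homogeneousSupported {T : Set σ} {n : ℕ} {i : σ}
    {F : MvPolynomial σ R} (hF : F ∈ homogeneousSupported R (insert i T) n) :
    F.modMonomial (Finsupp.single i 1) ∈ homogeneousSupported R T n := by
  rw [mem_homogeneousSupported] at hF ⊢
  intro m hm
  have hle : ¬ Finsupp.single i 1 ≤ m := fun hle => hm (coeff_modMonomial_of_le _ hle)
  rw [coeff_modMonomial_of_not_le _ hle] at hm
  obtain ⟨h1, h2⟩ := hF _ hm
  refine ⟨h1, fun j hj => (h2 j hj).resolve_left ?_⟩
  rintro rfl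
  exact hle (Finsupp.single_le_iff.2 (Nat.one_le_iff_ne_zero.2 hj))

lemma IsQuasiRegularOn.insert {a : σ → R} {T : Set σ} (h : IsQuasiRegularOn a T) {i : σ}
    (hi : ∀ y, a i * y ∈ Ideal.span (a '' T) → y ∈ Ideal.span (a '' T)) :
    IsQuasiRegularOn a (Insert.insert i T) := by
  have hle : Ideal.span (a '' T) ≤ Ideal.span (a '' Insert.insert i T) :=
    Ideal.span_mono (Set.image_mono (Set.subset_insert i T))
  have hai : a i ∈ Ideal.span (a '' Insert.insert i T) :=
    Ideal.subset_span ⟨i, Set.mem_insert i T, rfl⟩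
  intro n
  induction n with
  | zero =>
    intro F hF h0 m
    rw [coeff_eq_zero_of_eval_eq_zero (fun m hm => ?_) h0 m]
    · exact Ideal.zero_mem _
    · exact (Finsupp.degree_eq_zero_iff m).1 (mem_homogeneousSupported.1 hF m hm).1
  | succ n ih =>
    intro F hF h0 m
    set H := F.divMonomial (Finsupp.single i 1)
    set G := F.modMonomial (Finsupp.single i 1)
    have hdec : X i * H + G = F := divMonomial_add_modMonomial_single F i
    have hHm : H ∈ homogeneousSupported R (Insert.insert i T) n :=
      divMonomial_single_mem_homogeneousSupported hF i
    have hGm : G ∈ homogeneousSupported R T (n + 1) :=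
      modMonomial_single_mem_homogeneousSupported hF
    have heval : a i * eval a H + eval a G = 0 := by
      rw [← h0, ← hdec, map_add, map_mul, eval_X]
    have hHJ : eval a H ∈ Ideal.span (a '' T) ^ (n + 1) := by
      refine h.mem_pow_of_mul_mem hi _ ?_
      rw [eq_neg_of_add_eq_zero_left heval]
      exact neg_mem (eval_mem_span_pow a hGm)
    obtain ⟨K, hK, hKe⟩ := exists_eval_eq_of_mem_span_pow a hHJ
    have hHc := coeff_mem_of_eval_mem_pow_succ ih hHm (Ideal.pow_right_mono hle _ hHJ)
    have hGc : ∀ m, coeff m G ∈ Ideal.span (a '' Insert.insert i T) := by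
      intro m
      have := h _ (a i • K + G) (Submodule.add_mem _ (Submodule.smul_mem _ _ hK) hGm)
        (by rw [map_add, smul_eval, hKe, heval]) m
      rw [coeff_add, coeff_smul, smul_eq_mul] at this
      exact (Ideal.add_mem_iff_right _ (Ideal.mul_mem_right _ _ hai)).1 (hle this)
    classical
    rw [← hdec, coeff_add, coeff_X_mul']
    refine Ideal.add_mem _ ?_ (hGc m)
    split_ifs
    · exact hHc _
    · exact Ideal.zero_mem _

lemma isQuasiRegularOn_of_isWeaklyRegular {a : σ → R} {l : List σ}
    (hl : RingTheory.Sequence.IsWeaklyRegular R (l.map a)) :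
    IsQuasiRegularOn a {i | i ∈ l} := by
  induction l using List.reverseRecOn with
  | nil => simpa using isQuasiRegularOn_empty a
  | append_singleton l i ih =>
    rw [List.map_append, RingTheory.Sequence.isWeaklyRegular_append_iff, List.map_singleton,
      RingTheory.Sequence.isWeaklyRegular_singleton_iff] at hl
    have hspan : (Ideal.ofList (l.map a) • ⊤ : Submodule R R) =
        Ideal.span (a '' {i | i ∈ l}) := by
      rw [smul_eq_mul, Ideal.mul_top]
      exact congrArg Ideal.span (Set.ext fun x => by simp)
    have hset : {j | j ∈ l ++ [i]} = insert i {j | j ∈ l} := by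
      ext j
      simp [or_comm]
    rw [hset]
    refine (ih hl.1).insert fun y hy => ?_
    rw [← hspan] at hy ⊢
    rw [← Submodule.Quotient.mk_eq_zero] at hy ⊢
    exact hl.2.right_eq_zero_of_smul hy

lemma coeff_mem_span_range {a : σ → R}
    (hreg : ∀ l : List σ, l.Nodup →
      ∃ l' : List σ, l'.Perm l ∧ RingTheory.Sequence.IsRegular R (l'.map a))
    {n : ℕ} {F : MvPolynomial σ R} (hF : F ∈ homogeneousSupported R Set.univ n)
    (hF' : eval a F ∈ Ideal.span (Set.range a) ^ (n + 1)) (m : σ →₀ ℕ) :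
    coeff m F ∈ Ideal.span (Set.range a) := by
  classical
  rw [← Set.image_univ] at hF'
  obtain ⟨G, hG, hGe⟩ := exists_eval_eq_of_mem_span_pow a hF'
  obtain ⟨S, hS⟩ := exists_finset_mem_homogeneousSupported hF
  obtain ⟨S', hS'⟩ := exists_finset_mem_homogeneousSupported hG
  obtain ⟨l, hl, hlreg⟩ := hreg (S ∪ S').toList (Finset.nodup_toList _)
  have hmem : ∀ i, i ∈ l ↔ i ∈ S ∨ i ∈ S' := fun i => by simp [hl.mem_iff]
  refine Ideal.span_mono (Set.image_subset_range a {i | i ∈ l}) ?_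
  refine coeff_mem_of_eval_mem_pow_succ
    (isQuasiRegularOn_of_isWeaklyRegular hlreg.toIsWeaklyRegular n)
    (homogeneousSupported_mono (fun i hi => (hmem i).2 (Or.inl hi)) n hS) ?_ m
  rw [← hGe]
  exact eval_mem_span_pow a
    (homogeneousSupported_mono (fun i hi => (hmem i).2 (Or.inr hi)) _ hS')

end MvPolynomial

lemma Finsupp.exists_sum_single_eq {σ : Type*} {n : ℕ} {m : σ →₀ ℕ} (hm : m.degree = n) :
    ∃ f : Fin n → σ, ∑ i, Finsupp.single (f i) 1 = m := by
  induction n generalizing m with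
  | zero => exact ⟨Fin.elim0, by simp [(Finsupp.degree_eq_zero_iff m).1 hm]⟩
  | succ n ih =>
    have hm0 : m ≠ 0 := by
      rintro rfl
      simp at hm
    obtain ⟨j, hj⟩ := Finsupp.ne_iff.1 hm0
    have hadd : Finsupp.single j 1 + (m - Finsupp.single j 1) = m :=
      add_tsub_cancel_of_le (Finsupp.single_le_iff.2 (Nat.one_le_iff_ne_zero.2 hj))
    obtain ⟨f, hf⟩ := ih (m := m - Finsupp.single j 1) (by
      rw [← hadd, map_add, Finsupp.degree_single] at hm
      omega)
    exact ⟨Fin.cons j f, by simp [Fin.sum_univ_succ, hf, hadd]⟩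

lemma Finsupp.degree_sum_single {σ : Type*} {n : ℕ} (f : Fin n → σ) :
    (∑ i, Finsupp.single (f i) 1 : σ →₀ ℕ).degree = n := by
  simp [map_sum]

lemma Finsupp.exists_perm_of_sum_single_eq {σ : Type*} {n : ℕ} {f g : Fin n → σ}
    (h : (∑ i, Finsupp.single (f i) 1 : σ →₀ ℕ) = ∑ i, Finsupp.single (g i) 1) :
    ∃ τ : Equiv.Perm (Fin n), f = g ∘ τ := by
  classical
  have hcard : ∀ c, Nonempty ({i // f i = c} ≃ {i // g i = c}) := fun c => by
    rw [← Fintype.card_eq, Fintype.card_subtype, Fintype.card_subtype]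
    simpa [Finsupp.finsetSum_apply, Finsupp.single_apply] using DFunLike.congr_fun h c
  let e := fun c => (hcard c).some
  exact ⟨Equiv.ofFiberEquiv e, funext fun i => (Equiv.ofFiberEquiv_map e i).symm⟩

lemma Finsupp.prod_pow_sum_single {σ R : Type*} [CommRing R] (a : σ → R) {n : ℕ}
    (f : Fin n → σ) :
    ((∑ i, Finsupp.single (f i) 1 : σ →₀ ℕ).prod fun j k => a j ^ k) = ∏ i, a (f i) := by
  rw [← Finsupp.prod_finsetSum_index (by simp) (by simp [pow_add])]
  simp

lemma MultilinearMap.mem_span_range_comp {k M N Φ : Type*} [CommRing k] [AddCommGroup M]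
    [Module k M] [AddCommGroup N] [Module k N] {s : ℕ}
    (μ : MultilinearMap k (fun _ : Fin s => M) N) {b : Φ → M}
    (hb : Submodule.span k (Set.range b) = ⊤) (x : Fin s → M) :
    μ x ∈ Submodule.span k (Set.range fun f : Fin s → Φ => μ (b ∘ f)) := by
  classical
  have hx : ∀ i, ∃ c : Φ →₀ k, ∑ j ∈ c.support, c j • b j = x i := fun i =>
    Finsupp.mem_span_range_iff_exists_finsupp.1 (hb ▸ Submodule.mem_top)
  choose c hc using hx
  rw [← funext hc, μ.map_sum_finset]
  refine Submodule.sum_mem _ fun f _ => ?_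
  rw [μ.map_smul_univ]
  exact Submodule.smul_mem _ _ (Submodule.subset_span ⟨f, rfl⟩)

namespace Ideal

variable {R : Type*} [CommRing R] (𝔞 : Ideal R)

lemma prod_mem_pow_card {ι : Type*} (S : Finset ι) {x : ι → R} (hx : ∀ i, x i ∈ 𝔞) :
    ∏ i ∈ S, x i ∈ 𝔞 ^ S.card := by
  rw [← Finset.prod_const]
  exact Ideal.prod_mem_prod fun i _ => hx i

lemma prod_fin_mem_pow {s : ℕ} {x : Fin s → R} (hx : ∀ i, x i ∈ 𝔞) : ∏ i, x i ∈ 𝔞 ^ s := by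
  simpa using prod_mem_pow_card 𝔞 Finset.univ hx

lemma prod_sub_prod_mem_pow {ι : Type*} (S : Finset ι) {x y : ι → R} (hx : ∀ i, x i ∈ 𝔞)
    (hy : ∀ i, y i ∈ 𝔞) (hxy : ∀ i, x i - y i ∈ 𝔞 ^ 2) :
    ∏ i ∈ S, x i - ∏ i ∈ S, y i ∈ 𝔞 ^ (S.card + 1) := by
  classical
  induction S using Finset.induction_on with
  | empty => simp
  | insert i S hi ih =>
    rw [Finset.prod_insert hi, Finset.prod_insert hi, Finset.card_insert_of_notMem hi,
      show x i * ∏ j ∈ S, x j - y i * ∏ j ∈ S, y j =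
        (x i - y i) * ∏ j ∈ S, x j + y i * (∏ j ∈ S, x j - ∏ j ∈ S, y j) by ring]
    refine Ideal.add_mem _ ?_ ?_
    · have := Ideal.mul_mem_mul (hxy i) (prod_mem_pow_card 𝔞 S hx)
      rwa [← pow_add, add_comm] at this
    · have := Ideal.mul_mem_mul (hy i) ih
      rwa [← pow_succ'] at this

/-- The conormal module `𝔞/𝔞²`. -/
abbrev Conormal := ↥𝔞 ⧸ Submodule.comap 𝔞.subtype (𝔞 ^ 2)

/-- The graded piece `𝔞ˢ/𝔞ˢ⁺¹`. -/
abbrev PowQuotient (s : ℕ) :=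
  ↥(𝔞 ^ s) ⧸ Submodule.comap (𝔞 ^ s).subtype (𝔞 ^ (s + 1))

variable {𝔞}

lemma PowQuotient.mk_eq_mk_iff {s : ℕ} {x y : R} (hx : x ∈ 𝔞 ^ s) (hy : y ∈ 𝔞 ^ s) :
    (Submodule.Quotient.mk ⟨x, hx⟩ : PowQuotient 𝔞 s) = Submodule.Quotient.mk ⟨y, hy⟩ ↔
      x - y ∈ 𝔞 ^ (s + 1) := by
  rw [Submodule.Quotient.eq]
  rfl

variable (𝔞) in
/-- The product map `(𝔞/𝔞²)ˢ → 𝔞ˢ/𝔞ˢ⁺¹`. -/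
noncomputable def conormalProd (s : ℕ) (x : Fin s → Conormal 𝔞) : PowQuotient 𝔞 s :=
  Submodule.Quotient.mk ⟨∏ i, ((x i).out : R), prod_fin_mem_pow 𝔞 fun i => (x i).out.2⟩

lemma conormalProd_mk {s : ℕ} (x : Fin s → 𝔞) :
    conormalProd 𝔞 s (fun i => Submodule.Quotient.mk (x i)) =
      Submodule.Quotient.mk ⟨∏ i, (x i : R), prod_fin_mem_pow 𝔞 fun i => (x i).2⟩ := by
  rw [conormalProd, PowQuotient.mk_eq_mk_iff]
  have := prod_sub_prod_mem_pow 𝔞 Finset.univ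
    (x := fun i => ((Submodule.Quotient.mk (x i) : Conormal 𝔞).out : R)) (y := fun i => (x i : R))
    (fun i => Subtype.property _) (fun i => Subtype.property _) fun i => by
      have h := (Submodule.Quotient.eq (Submodule.comap 𝔞.subtype (𝔞 ^ 2))).1
        (Quotient.out_eq (Submodule.Quotient.mk (x i) : Conormal 𝔞))
      exact h
  simpa using this

lemma conormalProd_update_mk {s : ℕ} [DecidableEq (Fin s)] (x : Fin s → 𝔞) (i : Fin s) (u : 𝔞) :
    conormalProd 𝔞 s (Function.update (fun i => Submodule.Quotient.mk (x i)) i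
      (Submodule.Quotient.mk u)) =
      Submodule.Quotient.mk ⟨∏ j, (Function.update x i u j : R),
        prod_fin_mem_pow 𝔞 fun j => (Function.update x i u j).2⟩ := by
  rw [← conormalProd_mk]
  congr 1
  ext j
  by_cases h : j = i
  · subst h; simp
  · simp [h]

lemma prod_coe_update {s : ℕ} [DecidableEq (Fin s)] (x : Fin s → 𝔞) (i : Fin s) (u : 𝔞) :
    ∏ j, (Function.update x i u j : R) = u * ∏ j ∈ Finset.univ \ {i}, (x j : R) := by
  have := Finset.prod_update_of_mem (Finset.mem_univ i) (fun j => (x j : R)) (u : R)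
  rw [← this]
  refine Finset.prod_congr rfl fun j _ => ?_
  by_cases h : j = i
  · subst h; simp
  · simp [h]

section

variable (𝔞) (s : ℕ) [Module (R ⧸ 𝔞) (Conormal 𝔞)] [Module (R ⧸ 𝔞) (PowQuotient 𝔞 s)]
  (h₁ : ∀ (r : R) (x : Conormal 𝔞), Ideal.Quotient.mk 𝔞 r • x = r • x)
  (h₂ : ∀ (r : R) (x : PowQuotient 𝔞 s), Ideal.Quotient.mk 𝔞 r • x = r • x)

/-- The product map `(𝔞/𝔞²)ˢ → 𝔞ˢ/𝔞ˢ⁺¹` as a multilinear map. -/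
noncomputable def conormalProdMultilinear :
    MultilinearMap (R ⧸ 𝔞) (fun _ : Fin s => Conormal 𝔞) (PowQuotient 𝔞 s) where
  toFun := conormalProd 𝔞 s
  map_update_add' x i u v := by
    choose x' hx' using fun j => Submodule.Quotient.mk_surjective _ (x j)
    obtain ⟨u, rfl⟩ := Submodule.Quotient.mk_surjective _ u
    obtain ⟨v, rfl⟩ := Submodule.Quotient.mk_surjective _ v
    obtain rfl := funext hx'
    rw [← Submodule.Quotient.mk_add, conormalProd_update_mk, conormalProd_update_mk,
      conormalProd_update_mk, ← Submodule.Quotient.mk_add]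
    congr 1
    ext
    simp only [prod_coe_update, Submodule.coe_add, add_mul]
  map_update_smul' x i c u := by
    choose x' hx' using fun j => Submodule.Quotient.mk_surjective _ (x j)
    obtain ⟨u, rfl⟩ := Submodule.Quotient.mk_surjective _ u
    obtain ⟨c, rfl⟩ := Ideal.Quotient.mk_surjective c
    obtain rfl := funext hx'
    rw [h₁, h₂, ← Submodule.Quotient.mk_smul, conormalProd_update_mk, conormalProd_update_mk,
      ← Submodule.Quotient.mk_smul]
    congr 1
    ext
    simp only [prod_coe_update, Submodule.coe_smul, smul_eq_mul, mul_assoc]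

/-- The product map `Symˢ(𝔞/𝔞²) → 𝔞ˢ/𝔞ˢ⁺¹`. -/
noncomputable def symPowConormalMap :
    SymPow (R ⧸ 𝔞) (Conormal 𝔞) s →ₗ[R ⧸ 𝔞] PowQuotient 𝔞 s :=
  Submodule.liftQ _ (PiTensorProduct.lift (conormalProdMultilinear 𝔞 s h₁ h₂)) (by
    rw [Submodule.span_le]
    rintro _ ⟨x, τ, rfl⟩
    choose x' hx' using fun j => Submodule.Quotient.mk_surjective _ (x j)
    obtain rfl := funext hx'
    have hcomp : (fun j => (Submodule.Quotient.mk (x' j) : Conormal 𝔞)) ∘ τ =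
      fun j => Submodule.Quotient.mk (x' (τ j)) := rfl
    rw [SetLike.mem_coe, LinearMap.mem_ker, map_sub, sub_eq_zero, PiTensorProduct.lift.tprod,
      PiTensorProduct.lift.tprod, hcomp]
    change conormalProd 𝔞 s _ = conormalProd 𝔞 s _
    rw [conormalProd_mk, conormalProd_mk]
    congr 2
    exact (Equiv.prod_comp τ fun j => (x' j : R)).symm)

lemma symPowConormalMap_mk_tprod (x : Fin s → 𝔞) :
    symPowConormalMap 𝔞 s h₁ h₂ (Submodule.Quotient.mk (PiTensorProduct.tprod (R ⧸ 𝔞)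
      fun i => Submodule.Quotient.mk (x i))) =
      Submodule.Quotient.mk ⟨∏ i, (x i : R), prod_fin_mem_pow 𝔞 fun i => (x i).2⟩ := by
  rw [symPowConormalMap, Submodule.liftQ_apply, PiTensorProduct.lift.tprod]
  exact conormalProd_mk x

variable {Φ : Type*} {a : Φ → R} (ha : ∀ α, a α ∈ 𝔞)

/-- The class in `Symˢ(𝔞/𝔞²)` of the monomial in the `a α` with exponents `m`. -/
noncomputable def symPowMonomial (m : {m : Φ →₀ ℕ // m.degree = s}) :
    SymPow (R ⧸ 𝔞) (Conormal 𝔞) s :=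
  Submodule.Quotient.mk (PiTensorProduct.tprod (R ⧸ 𝔞) fun i =>
    Submodule.Quotient.mk ⟨a ((Finsupp.exists_sum_single_eq m.2).choose i), ha _⟩)

lemma mk_tprod_eq_symPowMonomial (f : Fin s → Φ) :
    (Submodule.Quotient.mk (PiTensorProduct.tprod (R ⧸ 𝔞) fun i =>
      Submodule.Quotient.mk ⟨a (f i), ha _⟩) : SymPow (R ⧸ 𝔞) (Conormal 𝔞) s) =
      symPowMonomial 𝔞 s ha ⟨_, Finsupp.degree_sum_single f⟩ := by
  obtain ⟨τ, hτ⟩ := Finsupp.exists_perm_of_sum_single_eq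
    (Finsupp.exists_sum_single_eq (Finsupp.degree_sum_single f)).choose_spec
  rw [symPowMonomial, Submodule.Quotient.eq]
  refine Submodule.subset_span
    ⟨fun i => Submodule.Quotient.mk ⟨a (f i), ha _⟩, τ, congrArg _ (congrArg _ (funext fun i => ?_))⟩
  simp only [hτ, Function.comp_apply]

lemma symPowConormalMap_symPowMonomial (m : {m : Φ →₀ ℕ // m.degree = s})
    (hm : (m.1.prod fun i k => a i ^ k) ∈ 𝔞 ^ s) :
    symPowConormalMap 𝔞 s h₁ h₂ (symPowMonomial 𝔞 s ha m) = Submodule.Quotient.mk ⟨_, hm⟩ := by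
  rw [symPowMonomial, symPowConormalMap_mk_tprod]
  congr 2
  rw [← Finsupp.prod_pow_sum_single a, (Finsupp.exists_sum_single_eq m.2).choose_spec]

lemma span_symPowMonomial
    (h₁ : ∀ (r : R) (x : Conormal 𝔞), Ideal.Quotient.mk 𝔞 r • x = r • x) (h𝔞 : 𝔞 = Ideal.span (Set.range a)) :
    Submodule.span (R ⧸ 𝔞) (Set.range (symPowMonomial 𝔞 s ha)) = ⊤ := by
  let b : Φ → Conormal 𝔞 := fun α => Submodule.Quotient.mk ⟨a α, ha α⟩
  have hb : Submodule.span (R ⧸ 𝔞) (Set.range b) = ⊤ := by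
    refine eq_top_iff.2 fun x _ => ?_
    obtain ⟨⟨x, hx⟩, rfl⟩ := Submodule.Quotient.mk_surjective _ x
    have hx' := hx
    rw [h𝔞] at hx'
    obtain ⟨c, hc⟩ := Finsupp.mem_span_range_iff_exists_finsupp.1 hx'
    have hsum : (⟨x, hx⟩ : 𝔞) = ∑ α ∈ c.support, c α • (⟨a α, ha α⟩ : 𝔞) := by
      ext
      simp [← hc, Finsupp.sum]
    rw [hsum, ← Submodule.mkQ_apply, map_sum]
    refine Submodule.sum_mem _ fun α _ => ?_
    rw [map_smul, ← h₁]
    exact Submodule.smul_mem _ _ (Submodule.subset_span ⟨α, rfl⟩)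
  refine eq_top_iff.2 fun z _ => ?_
  obtain ⟨z, rfl⟩ := Submodule.Quotient.mk_surjective _ z
  have hz : z ∈ Submodule.span (R ⧸ 𝔞)
      (Set.range (PiTensorProduct.tprod (R ⧸ 𝔞) (s := fun _ : Fin s => Conormal 𝔞))) := by
    rw [PiTensorProduct.span_tprod_eq_top]
    trivial
  refine Submodule.span_induction ?_ ?_ ?_ ?_ hz
  · rintro _ ⟨x, rfl⟩
    have hx := ((Submodule.mkQ _).compMultilinearMap
      (PiTensorProduct.tprod (R ⧸ 𝔞))).mem_span_range_comp (N := SymPow (R ⧸ 𝔞) (Conormal 𝔞) s)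
        hb x
    refine Submodule.span_mono ?_ hx
    rintro _ ⟨f, rfl⟩
    exact ⟨_, (mk_tprod_eq_symPowMonomial 𝔞 s ha f).symm⟩
  · exact Submodule.zero_mem _
  · exact fun x y _ _ hx hy => Submodule.add_mem _ hx hy
  · exact fun c x _ hx => Submodule.smul_mem _ c hx

lemma symPowConormalMap_sum {ι : Type*} (S : Finset ι) (c : ι → R)
    (m : ι → {m : Φ →₀ ℕ // m.degree = s})
    (hm : ∑ i ∈ S, c i * ((m i).1.prod fun j k => a j ^ k) ∈ 𝔞 ^ s) :
    symPowConormalMap 𝔞 s h₁ h₂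
      (∑ i ∈ S, Ideal.Quotient.mk 𝔞 (c i) • symPowMonomial 𝔞 s ha (m i)) =
      Submodule.Quotient.mk ⟨_, hm⟩ := by
  have hmem : ∀ i, ((m i).1.prod fun j k => a j ^ k) ∈ 𝔞 ^ s := fun i => by
    have := MvPolynomial.prod_pow_mem_span_pow a (T := Set.univ) (m := (m i).1)
      fun _ _ => Set.mem_univ _
    rw [(m i).2] at this
    refine Ideal.pow_right_mono (Ideal.span_le.2 ?_) s this
    rintro _ ⟨α, -, rfl⟩
    exact ha α
  have hsum : (⟨_, hm⟩ : ↥(𝔞 ^ s)) = ∑ i ∈ S, c i • (⟨_, hmem i⟩ : ↥(𝔞 ^ s)) := by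
    ext
    simp
  rw [hsum, map_sum, ← Submodule.mkQ_apply, map_sum]
  refine Finset.sum_congr rfl fun i _ => ?_
  rw [map_smul, symPowConormalMap_symPowMonomial 𝔞 s h₁ h₂ ha (m i) (hmem i), h₂, map_smul]
  rfl

lemma symPowConormalMap_surjective (h𝔞 : 𝔞 = Ideal.span (Set.range a)) :
    Function.Surjective (symPowConormalMap 𝔞 s h₁ h₂) := by
  have ha : ∀ α, a α ∈ 𝔞 := fun α => h𝔞 ▸ Ideal.subset_span ⟨α, rfl⟩
  intro y
  obtain ⟨⟨y, hy⟩, rfl⟩ := Submodule.Quotient.mk_surjective _ y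
  have hy' := hy
  rw [h𝔞, ← Set.image_univ] at hy'
  obtain ⟨F, hF, rfl⟩ := MvPolynomial.exists_eval_eq_of_mem_span_pow a hy'
  have hdeg : ∀ m : F.support, m.1.degree = s := fun m =>
    (MvPolynomial.mem_homogeneousSupported.1 hF m.1 (MvPolynomial.mem_support_iff.1 m.2)).1
  have heq : MvPolynomial.eval a F = ∑ m ∈ F.support.attach,
      MvPolynomial.coeff m.1 F * (m.1.prod fun j k => a j ^ k) := by
    rw [MvPolynomial.eval_eq, ← Finset.sum_attach]
    rfl
  refine ⟨_, (symPowConormalMap_sum 𝔞 s h₁ h₂ ha F.support.attach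
    (fun m => MvPolynomial.coeff m.1 F) (fun m => ⟨m.1, hdeg m⟩) (heq ▸ hy)).trans ?_⟩
  congr 2
  exact heq.symm

lemma symPowConormalMap_injective (h𝔞 : 𝔞 = Ideal.span (Set.range a))
    (hreg : ∀ l : List Φ, l.Nodup →
      ∃ l' : List Φ, l'.Perm l ∧ RingTheory.Sequence.IsRegular R (l'.map a)) :
    Function.Injective (symPowConormalMap 𝔞 s h₁ h₂) := by
  classical
  have ha : ∀ α, a α ∈ 𝔞 := fun α => h𝔞 ▸ Ideal.subset_span ⟨α, rfl⟩
  rw [injective_iff_map_eq_zero]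
  intro z hz
  have hzspan : z ∈ Submodule.span (R ⧸ 𝔞) (Set.range (symPowMonomial 𝔞 s ha)) := by
    rw [span_symPowMonomial 𝔞 s ha h₁ h𝔞]
    trivial
  obtain ⟨c, rfl⟩ := Finsupp.mem_span_range_iff_exists_finsupp.1 hzspan
  choose r hr using fun m => Ideal.Quotient.mk_surjective (c m)
  let F : MvPolynomial Φ R := ∑ m ∈ c.support, MvPolynomial.monomial m.1 (r m)
  have hF : F ∈ MvPolynomial.homogeneousSupported R Set.univ s :=
    Submodule.sum_mem _ fun m _ =>
      (MvPolynomial.monomial_mem_restrictSupport R).2 (Or.inl ⟨m.2, fun _ _ => Set.mem_univ _⟩)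
  have hcoeff : ∀ m ∈ c.support, MvPolynomial.coeff m.1 F = r m := fun m hm => by
    simp only [F, MvPolynomial.coeff_sum, MvPolynomial.coeff_monomial, Subtype.coe_inj]
    rw [Finset.sum_ite_eq_of_mem' _ _ _ hm]
  have heval : MvPolynomial.eval a F =
      ∑ m ∈ c.support, r m * (m.1.prod fun j k => a j ^ k) := by
    simp only [F, map_sum, MvPolynomial.eval_monomial]
  have hmem : MvPolynomial.eval a F ∈ 𝔞 ^ s := by
    have := MvPolynomial.eval_mem_span_pow a hF
    rwa [Set.image_univ, ← h𝔞] at this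
  simp only [Finsupp.sum, ← hr] at hz ⊢
  rw [symPowConormalMap_sum 𝔞 s h₁ h₂ ha _ r (fun m => m) (heval ▸ hmem),
    Submodule.Quotient.mk_eq_zero] at hz
  have hz' : MvPolynomial.eval a F ∈ Ideal.span (Set.range a) ^ (s + 1) := by
    rw [heval, ← h𝔞]
    exact hz
  refine Finset.sum_eq_zero fun m hm => ?_
  have hrm := MvPolynomial.coeff_mem_span_range hreg hF hz' m.1
  rw [hcoeff m hm, ← h𝔞] at hrm
  rw [Ideal.Quotient.eq_zero_iff_mem.2 hrm, zero_smul]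

end

end Ideal

/-- Let `R` be a commutative ring and `(a α)` a family of elements of `R`
such that any finitely many pairwise distinct members form a regular sequence on `R` in some
order, and let `𝔞` be the ideal generated by the `a α`.  Then for every `s ≥ 1` there is an
isomorphism of `R/𝔞`-modules `Sym^s_{R/𝔞}(𝔞/𝔞²) ≅ 𝔞^s/𝔞^{s+1}` sending
`(a₁+𝔞²)·…·(aₛ+𝔞²)` to `a₁⋯aₛ + 𝔞^{s+1}` for all `a₁, …, aₛ ∈ 𝔞`.
(The `R/𝔞`-module structures on `𝔞/𝔞²` and `𝔞^s/𝔞^{s+1}` are the canonical ones, obtained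
from the fact that `𝔞` annihilates these quotients.) -/
theorem symPow_ideal_quotient_iso
    (R : Type*) [CommRing R] (Φ : Type*) (a : Φ → R)
    (hreg : ∀ l : List Φ, l.Nodup →
      ∃ l' : List Φ, l'.Perm l ∧ RingTheory.Sequence.IsRegular R (l'.map a))
    (𝔞 : Ideal R) (h𝔞 : 𝔞 = Ideal.span (Set.range a))
    (s : ℕ) (hs : 1 ≤ s)
    (htor1 : Module.IsTorsionBySet R
      (↥𝔞 ⧸ Submodule.comap 𝔞.subtype (𝔞 ^ 2)) 𝔞)
    (htor2 : Module.IsTorsionBySet R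
      (↥(𝔞 ^ s) ⧸ Submodule.comap (𝔞 ^ s).subtype (𝔞 ^ (s + 1))) 𝔞) :
    letI := htor1.module
    letI := htor2.module
    ∃ e : SymPow (R ⧸ 𝔞) (↥𝔞 ⧸ Submodule.comap 𝔞.subtype (𝔞 ^ 2)) s ≃ₗ[R ⧸ 𝔞]
        (↥(𝔞 ^ s) ⧸ Submodule.comap (𝔞 ^ s).subtype (𝔞 ^ (s + 1))),
      ∀ (x : Fin s → R) (hx : ∀ i, x i ∈ 𝔞) (hp : (∏ i, x i) ∈ 𝔞 ^ s),
        e (Submodule.Quotient.mk (PiTensorProduct.tprod (R ⧸ 𝔞)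
              (fun i => Submodule.Quotient.mk ⟨x i, hx i⟩)))
          = Submodule.Quotient.mk ⟨∏ i, x i, hp⟩ := by
  let := htor1.module
  let := htor2.module
  have h₁ : ∀ (r : R) (x : Ideal.Conormal 𝔞), Ideal.Quotient.mk 𝔞 r • x = r • x :=
    fun _ _ => rfl
  have h₂ : ∀ (r : R) (x : Ideal.PowQuotient 𝔞 s), Ideal.Quotient.mk 𝔞 r • x = r • x :=
    fun _ _ => rfl
  exact ⟨LinearEquiv.ofBijective (Ideal.symPowConormalMap 𝔞 s h₁ h₂)
    ⟨Ideal.symPowConormalMap_injective 𝔞 s h₁ h₂ h𝔞 hreg,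
      Ideal.symPowConormalMap_surjective 𝔞 s h₁ h₂ h𝔞⟩,
    fun x hx _ => Ideal.symPowConormalMap_mk_tprod 𝔞 s h₁ h₂ fun i => ⟨x i, hx i⟩⟩
end

section
/- Let A be a commutative ring, σ a type, P = A[X_α : α ∈ σ] the polynomial ring, and L the free A-module on σ with ι : L → P the A-linear map sending the basis vector e_α to the variable X_α. Then the Koszul-type complex K(L, P) is a resolution of A: the zeroth homology H_0(K(L,P)) is isomorphic to A via the constant-term map P → A, and H_i(K(L,P)) = 0 for every i ≥ 1. -/
open scoped TensorProduct

/-- The `n`-th exterior power `⋀[A]^n M`, as a type. -/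
def ExtPow (A : Type*) [CommRing A] (M : Type*) [AddCommGroup M] [Module A M]
    (n : ℕ) : Type _ := ↥(⋀[A]^n M)

noncomputable instance (A : Type*) [CommRing A] (M : Type*) [AddCommGroup M] [Module A M]
    (n : ℕ) : AddCommGroup (ExtPow A M n) := inferInstanceAs (AddCommGroup ↥(⋀[A]^n M))

noncomputable instance (A : Type*) [CommRing A] (M : Type*) [AddCommGroup M] [Module A M]
    (n : ℕ) : Module A (ExtPow A M n) := inferInstanceAs (Module A ↥(⋀[A]^n M))

/-- The element `x₁ ∧ … ∧ xₙ` of the `n`-th exterior power `⋀[A]^n M`. -/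
noncomputable def wedgeGen (A : Type*) [CommRing A] (M : Type*) [AddCommGroup M]
    [Module A M] (n : ℕ) (x : Fin n → M) : ExtPow A M n :=
  ⟨ExteriorAlgebra.ιMulti A n x,
    ExteriorAlgebra.ιMulti_range A n (Set.mem_range_self x)⟩

namespace KoszulPolynomial

open MvPolynomial

variable {A : Type*} [CommRing A] {σ : Type*}

/-- Left exterior multiplication by `x`, from degree `i` to degree `i + 1`. -/
noncomputable def wedgeLeft {M : Type*} [AddCommGroup M] [Module A M] (i : ℕ) (x : M) :
    ExtPow A M i →ₗ[A] ExtPow A M (i + 1) :=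
  (LinearMap.mulLeft A (ExteriorAlgebra.ι A x)).restrict (p := ⋀[A]^i M) (q := ⋀[A]^(i + 1) M)
    fun w hw => by
      rw [ExteriorAlgebra.exteriorPower, pow_succ']
      exact Submodule.mul_mem_mul (LinearMap.mem_range_self _ x) hw

section ExtPow

variable {M : Type*} [AddCommGroup M] [Module A M]

theorem wedgeLeft_wedgeGen {i : ℕ} (x : M) (v : Fin i → M) :
    wedgeLeft i x (wedgeGen A M i v) = wedgeGen A M (i + 1) (Fin.cons x v) :=
  Subtype.ext (by
    simp only [wedgeGen, ExteriorAlgebra.ιMulti_succ_apply]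
    rfl)

theorem wedgeLeft_add (i : ℕ) (x y : M) :
    wedgeLeft (A := A) i (x + y) = wedgeLeft i x + wedgeLeft i y :=
  LinearMap.ext fun w => Subtype.ext (by
    change ExteriorAlgebra.ι A (x + y) * w.1 =
      ExteriorAlgebra.ι A x * w.1 + ExteriorAlgebra.ι A y * w.1
    rw [map_add, add_mul])

theorem wedgeLeft_smul (i : ℕ) (c : A) (x : M) :
    wedgeLeft (A := A) i (c • x) = c • wedgeLeft i x :=
  LinearMap.ext fun w => Subtype.ext (by
    change ExteriorAlgebra.ι A (c • x) * w.1 = c • (ExteriorAlgebra.ι A x * w.1)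
    rw [map_smul, smul_mul_assoc])

theorem wedgeLeft_self (i : ℕ) (x : M) (w : ExtPow A M i) :
    wedgeLeft (i + 1) x (wedgeLeft i x w) = 0 :=
  Subtype.ext (by
    change ExteriorAlgebra.ι A x * (ExteriorAlgebra.ι A x * w.1) = 0
    rw [← mul_assoc, ExteriorAlgebra.ι_sq_zero, zero_mul])

theorem wedgeLeft_anticomm (i : ℕ) (x y : M) (w : ExtPow A M i) :
    wedgeLeft (i + 1) x (wedgeLeft i y w) = -wedgeLeft (i + 1) y (wedgeLeft i x w) := by
  have h := wedgeLeft_self i (x + y) w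
  simp only [wedgeLeft_add, LinearMap.add_apply, map_add, wedgeLeft_self, zero_add,
    add_zero] at h
  exact eq_neg_of_add_eq_zero_right h

theorem span_range_wedgeGen (i : ℕ) :
    Submodule.span A (Set.range (wedgeGen A M i)) = ⊤ :=
  exteriorPower.ιMulti_span A i M

end ExtPow

/-- The degree `i` term of the Koszul complex of the polynomial ring. -/
abbrev Term (A : Type*) [CommRing A] (σ : Type*) (i : ℕ) : Type _ :=
  ExtPow A (σ →₀ A) i ⊗[A] MvPolynomial σ A

theorem term_induction {i : ℕ} {p : Term A σ i → Prop} (zero : p 0)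
    (add : ∀ z w, p z → p w → p (z + w))
    (gen : ∀ v y, p (wedgeGen A (σ →₀ A) i v ⊗ₜ[A] y)) (z : Term A σ i) : p z := by
  induction z using TensorProduct.induction_on with
  | zero => exact zero
  | add z w hz hw => exact add z w hz hw
  | tmul w y =>
    have hw : w ∈ Submodule.span A (Set.range (wedgeGen A (σ →₀ A) i)) := by
      rw [span_range_wedgeGen]; trivial
    induction hw using Submodule.span_induction generalizing y with
    | mem w hw => obtain ⟨v, rfl⟩ := hw; exact gen v y
    | zero => rwa [TensorProduct.zero_tmul]
    | add w w' _ _ h h' => rw [TensorProduct.add_tmul]; exact add _ _ (h y) (h' y)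
    | smul c w _ h => rw [TensorProduct.smul_tmul]; exact h _

/-- Left exterior multiplication on the Koszul complex. -/
noncomputable def wedge (i : ℕ) (x : σ →₀ A) : Term A σ i →ₗ[A] Term A σ (i + 1) :=
  (wedgeLeft i x).rTensor _

@[simp]
theorem wedge_tmul (i : ℕ) (x : σ →₀ A) (w : ExtPow A (σ →₀ A) i) (y : MvPolynomial σ A) :
    wedge i x (w ⊗ₜ[A] y) = wedgeLeft i x w ⊗ₜ[A] y := rfl

/-- The action of an endomorphism of the polynomial ring on the Koszul complex. -/
noncomputable def coeffMap (i : ℕ) (f : MvPolynomial σ A →ₗ[A] MvPolynomial σ A) :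
    Term A σ i →ₗ[A] Term A σ i := f.lTensor _

@[simp]
theorem coeffMap_tmul (i : ℕ) (f : MvPolynomial σ A →ₗ[A] MvPolynomial σ A)
    (w : ExtPow A (σ →₀ A) i) (y : MvPolynomial σ A) :
    coeffMap i f (w ⊗ₜ[A] y) = w ⊗ₜ[A] f y := rfl

theorem coeffMap_wedge (i : ℕ) (f : MvPolynomial σ A →ₗ[A] MvPolynomial σ A) (x : σ →₀ A)
    (z : Term A σ i) : coeffMap (i + 1) f (wedge i x z) = wedge i x (coeffMap i f z) := by
  induction z using TensorProduct.induction_on with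
  | zero => simp
  | add z w hz hw => simp only [map_add, hz, hw]
  | tmul w y => rfl

theorem wedge_self (i : ℕ) (x : σ →₀ A) (z : Term A σ i) :
    wedge (i + 1) x (wedge i x z) = 0 := by
  induction z using TensorProduct.induction_on with
  | zero => simp
  | add z w hz hw => simp only [map_add, hz, hw, add_zero]
  | tmul w y => simp [wedgeLeft_self]

theorem wedge_anticomm (i : ℕ) (x x' : σ →₀ A) (z : Term A σ i) :
    wedge (i + 1) x (wedge i x' z) = -wedge (i + 1) x' (wedge i x z) := by
  induction z using TensorProduct.induction_on with
  | zero => simp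
  | add z w hz hw => simp only [map_add, hz, hw, neg_add]
  | tmul w y => simp [wedgeLeft_anticomm i x x', TensorProduct.neg_tmul]

/-- The linear map from the free module on `σ` to the polynomial ring, sending basis vectors
to variables. -/
noncomputable def toPoly : (σ →₀ A) →ₗ[A] MvPolynomial σ A :=
  Finsupp.linearCombination A (fun α => X α)

@[simp]
theorem toPoly_single (s : σ) : toPoly (Finsupp.single s (1 : A)) = X s := by simp [toPoly]

theorem wedge_add_left (i : ℕ) (x x' : σ →₀ A) :
    wedge i (x + x') = wedge i x + wedge i x' := by
  simp [wedge, wedgeLeft_add, LinearMap.rTensor_add]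

theorem wedge_smul_left (i : ℕ) (c : A) (x : σ →₀ A) : wedge i (c • x) = c • wedge i x := by
  simp [wedge, wedgeLeft_smul, LinearMap.rTensor_smul]

theorem wedge_zero_left (i : ℕ) : wedge i (0 : σ →₀ A) = 0 := by
  simpa using wedge_smul_left i (0 : A) (0 : σ →₀ A)

theorem hom_ext_wedge_single {N : Type*} [AddCommGroup N] [Module A N] {i : ℕ}
    {f g : Term A σ (i + 1) →ₗ[A] N}
    (h : ∀ s z, f (wedge i (Finsupp.single s 1) z) = g (wedge i (Finsupp.single s 1) z)) :
    f = g := by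
  have key : ∀ x, f ∘ₗ wedge i x = g ∘ₗ wedge i x := fun x => by
    induction x using Finsupp.induction_linear with
    | zero => simp [wedge_zero_left]
    | add x y hx hy => rw [wedge_add_left, LinearMap.comp_add, LinearMap.comp_add, hx, hy]
    | single s c =>
      rw [← mul_one c, ← smul_eq_mul, ← Finsupp.smul_single, wedge_smul_left,
        LinearMap.comp_smul, LinearMap.comp_smul]
      exact congrArg (c • ·) (LinearMap.ext (h s))
  refine LinearMap.ext fun z => ?_
  induction z using term_induction with
  | zero => simp
  | add z w hz hw => simp only [map_add, hz, hw]
  | gen v y =>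
    have := LinearMap.congr_fun (key (v 0)) (wedgeGen A (σ →₀ A) i (Fin.tail v) ⊗ₜ[A] y)
    simpa [wedgeLeft_wedgeGen] using this

/-- The quotient of a polynomial by the variable `X a`, discarding the remainder. -/
noncomputable def divX (a : σ) : MvPolynomial σ A →ₗ[A] MvPolynomial σ A where
  toFun y := y.divMonomial (Finsupp.single a 1)
  map_add' := fun _ _ => add_divMonomial _ _ _
  map_smul' c y := by ext m; simp [coeff_divMonomial]

theorem divX_X_mul_self (a : σ) (y : MvPolynomial σ A) : divX a (X a * y) = y :=
  X_mul_divMonomial a y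

theorem divX_X_mul_of_ne {a s : σ} (h : s ≠ a) (y : MvPolynomial σ A) :
    divX a (X s * y) = X s * divX a y := by
  classical
  ext m
  simp only [divX, LinearMap.coe_mk, AddHom.coe_mk, coeff_divMonomial, coeff_X_mul',
    Finsupp.mem_support_iff, Finsupp.add_apply, Finsupp.single_eq_of_ne h, zero_add]
  split_ifs with hm
  · congr 1
    ext t
    simp only [Finsupp.coe_tsub, Pi.sub_apply, Finsupp.add_apply, Finsupp.single_apply]
    split_ifs <;> grind
  · rfl

open Classical in
/-- The projection of the free module which kills the basis vectors indexed by `T`. -/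
noncomputable def killVec (A : Type*) [CommRing A] {σ : Type*} (T : Set σ) :
    (σ →₀ A) →ₗ[A] (σ →₀ A) :=
  Finsupp.linearCombination A fun s => if s ∈ T then 0 else Finsupp.single s 1

open Classical in
/-- The endomorphism of the polynomial ring which kills the variables indexed by `T`. -/
noncomputable def killVar (A : Type*) [CommRing A] {σ : Type*} (T : Set σ) :
    MvPolynomial σ A →ₐ[A] MvPolynomial σ A :=
  aeval fun s => if s ∈ T then 0 else X s

theorem killVar_toPoly (T : Set σ) (x : σ →₀ A) :
    killVar A T (toPoly x) = toPoly (killVec A T x) := by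
  suffices (killVar A T).toLinearMap ∘ₗ toPoly = toPoly ∘ₗ killVec A T from
    LinearMap.congr_fun this x
  ext s : 2
  by_cases h : s ∈ T <;> simp [killVar, killVec, h]

theorem X_mul_divX_add_killVar (a : σ) (y : MvPolynomial σ A) :
    X a * divX a y + killVar A {a} y = y := by
  induction y using MvPolynomial.induction_on with
  | C c =>
    have : divX a (C c : MvPolynomial σ A) = 0 := by
      classical
      ext m
      have hm : (0 : σ →₀ ℕ) ≠ Finsupp.single a 1 + m := fun h => by
        have := DFunLike.congr_fun h a
        simp at this
        omega
      simp [divX, coeff_divMonomial, coeff_C, hm]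
    simp [this, killVar]
  | add p q hp hq =>
    rw [map_add, map_add, mul_add, add_add_add_comm, hp, hq]
  | mul_X p s hp =>
    rw [mul_comm p, map_mul (killVar A {a})]
    by_cases h : s = a
    · subst h
      simp [divX_X_mul_self, killVar]
    · rw [divX_X_mul_of_ne h]
      have : killVar A {a} (X s) = X s := by simp [killVar, h]
      rw [this, mul_left_comm, ← mul_add, hp]

/-- The endomorphism of the Koszul complex which kills the variables indexed by `T`. -/
noncomputable def kill (i : ℕ) (T : Set σ) : Term A σ i →ₗ[A] Term A σ i :=
  TensorProduct.map (exteriorPower.map i (killVec A T)) (killVar A T).toLinearMap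

theorem kill_wedgeGen (i : ℕ) (T : Set σ) (v : Fin i → σ →₀ A) (y : MvPolynomial σ A) :
    kill i T (wedgeGen A (σ →₀ A) i v ⊗ₜ[A] y) =
      wedgeGen A (σ →₀ A) i (killVec A T ∘ v) ⊗ₜ[A] killVar A T y :=
  congrArg (· ⊗ₜ[A] killVar A T y) (exteriorPower.map_apply_ιMulti (killVec A T) v)

theorem kill_wedge (i : ℕ) (T : Set σ) (x : σ →₀ A) (z : Term A σ i) :
    kill (i + 1) T (wedge i x z) = wedge i (killVec A T x) (kill i T z) := by
  induction z using term_induction with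
  | zero => simp
  | add z w hz hw => simp only [map_add, hz, hw]
  | gen v y =>
    rw [wedge_tmul, wedgeLeft_wedgeGen, kill_wedgeGen, kill_wedgeGen, wedge_tmul,
      wedgeLeft_wedgeGen, Fin.comp_cons]

theorem killVec_killVec (S T : Set σ) (x : σ →₀ A) :
    killVec A S (killVec A T x) = killVec A (S ∪ T) x := by
  suffices killVec A S ∘ₗ killVec A T = killVec A (S ∪ T) from LinearMap.congr_fun this x
  ext s : 2
  by_cases h : s ∈ T <;> by_cases h' : s ∈ S <;> simp [killVec, h, h']

theorem killVar_killVar (S T : Set σ) (y : MvPolynomial σ A) :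
    killVar A S (killVar A T y) = killVar A (S ∪ T) y := by
  suffices (killVar A S).comp (killVar A T) = killVar A (S ∪ T) from DFunLike.congr_fun this y
  ext s : 1
  by_cases h : s ∈ T <;> by_cases h' : s ∈ S <;> simp [killVar, h, h']

theorem kill_kill (i : ℕ) (S T : Set σ) (z : Term A σ i) :
    kill i S (kill i T z) = kill i (S ∪ T) z := by
  induction z using term_induction with
  | zero => simp
  | add z w hz hw => simp only [map_add, hz, hw]
  | gen v y =>
    simp only [kill_wedgeGen, killVar_killVar, Function.comp_def, killVec_killVec]

theorem kill_empty (i : ℕ) (z : Term A σ i) : kill i ∅ z = z := by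
  have h : killVec A (∅ : Set σ) = LinearMap.id := by ext s : 2; simp [killVec]
  have h' : killVar A (∅ : Set σ) = AlgHom.id A _ := by ext s : 1; simp [killVar]
  induction z using term_induction with
  | zero => simp
  | add z w hz hw => simp only [map_add, hz, hw]
  | gen v y => simp [kill_wedgeGen, h, h']

theorem killVec_univ : killVec A (Set.univ : Set σ) = 0 := by
  ext s : 2
  simp [killVec]

theorem killVar_univ (y : MvPolynomial σ A) :
    killVar A Set.univ y = C (constantCoeff y) := by
  induction y using MvPolynomial.induction_on with
  | C c => simp [killVar]
  | add p q hp hq => simp only [map_add, hp, hq]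
  | mul_X p s hp => simp [killVar]

theorem exists_finset_kill_eq (i : ℕ) (z : Term A σ i) :
    ∃ T : Finset σ, ∀ S : Set σ, ↑T ⊆ S → kill i S z = kill i Set.univ z := by
  classical
  induction z using term_induction with
  | zero => exact ⟨∅, by simp⟩
  | add z w hz hw =>
    obtain ⟨T, hT⟩ := hz
    obtain ⟨U, hU⟩ := hw
    refine ⟨T ∪ U, fun S hS => ?_⟩
    rw [Finset.coe_union, Set.union_subset_iff] at hS
    rw [map_add, map_add, hT S hS.1, hU S hS.2]
  | gen v y =>
    refine ⟨(Finset.univ.biUnion fun k => (v k).support) ∪ y.vars, fun S hS => ?_⟩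
    rw [kill_wedgeGen, kill_wedgeGen]
    have hv : killVec A S ∘ v = killVec A Set.univ ∘ v := by
      funext k
      simp only [Function.comp, killVec, Finsupp.linearCombination_apply]
      refine Finset.sum_congr rfl fun s hs => ?_
      have : s ∈ S := hS (by
        simp only [Finset.coe_union, Set.mem_union, Finset.mem_coe, Finset.mem_biUnion]
        exact Or.inl ⟨k, Finset.mem_univ k, hs⟩)
      simp [this]
    have hy : killVar A S y = killVar A Set.univ y := by
      refine eval₂Hom_congr' rfl (fun s hs _ => ?_) rfl
      have : s ∈ S := hS (by simp [hs])
      simp [this]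
    rw [hv, hy]

/-- Multiplication by a polynomial on the Koszul complex. -/
noncomputable def mulP (i : ℕ) (p : MvPolynomial σ A) : Term A σ i →ₗ[A] Term A σ i :=
  coeffMap i (LinearMap.mulLeft A p)

@[simp]
theorem mulP_tmul (i : ℕ) (p : MvPolynomial σ A) (w : ExtPow A (σ →₀ A) i)
    (y : MvPolynomial σ A) : mulP i p (w ⊗ₜ[A] y) = w ⊗ₜ[A] (p * y) := rfl

/-- The defining formula of the Koszul differential. -/
def IsKoszulDifferential (d : ∀ i : ℕ, Term A σ (i + 1) →ₗ[A] Term A σ i) : Prop :=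
  ∀ (i : ℕ) (x : Fin (i + 1) → (σ →₀ A)) (y : MvPolynomial σ A),
    d i (wedgeGen A (σ →₀ A) (i + 1) x ⊗ₜ[A] y) =
      ∑ k : Fin (i + 1), (-1 : ℤ) ^ (k : ℕ) •
        (wedgeGen A (σ →₀ A) i (x ∘ k.succAbove) ⊗ₜ[A] (toPoly (x k) * y))

/-- The contracting homotopy in the direction of the variable `X a`. -/
noncomputable def homotopy (a : σ) (i : ℕ) : Term A σ i →ₗ[A] Term A σ (i + 1) :=
  wedge i (Finsupp.single a 1) ∘ₗ coeffMap i (divX a)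

theorem homotopy_apply (a : σ) (i : ℕ) (z : Term A σ i) :
    homotopy a i z = wedge i (Finsupp.single a 1) (coeffMap i (divX a) z) := rfl

theorem homotopy_wedge (a : σ) (i : ℕ) (x : σ →₀ A) (z : Term A σ i) :
    homotopy a (i + 1) (wedge i x z) = -wedge (i + 1) x (homotopy a i z) := by
  rw [homotopy_apply, homotopy_apply, coeffMap_wedge, wedge_anticomm]

theorem homotopy_wedge_self (a : σ) (i : ℕ) (z : Term A σ i) :
    homotopy a (i + 1) (wedge i (Finsupp.single a 1) z) = 0 := by
  rw [homotopy_apply, coeffMap_wedge, wedge_self]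

theorem homotopy_mulP_self (a : σ) (i : ℕ) (z : Term A σ i) :
    homotopy a i (mulP i (X a) z) = wedge i (Finsupp.single a 1) z := by
  induction z using TensorProduct.induction_on with
  | zero => simp
  | add z w hz hw => simp only [map_add, hz, hw]
  | tmul w y => simp [homotopy_apply, divX_X_mul_self]

theorem homotopy_mulP_of_ne {a s : σ} (h : s ≠ a) (i : ℕ) (z : Term A σ i) :
    homotopy a i (mulP i (X s) z) = mulP (i + 1) (X s) (homotopy a i z) := by
  induction z using TensorProduct.induction_on with
  | zero => simp
  | add z w hz hw => simp only [map_add, hz, hw]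
  | tmul w y => simp [homotopy_apply, divX_X_mul_of_ne h]

theorem kill_singleton_wedge_self (a : σ) (i : ℕ) (z : Term A σ i) :
    kill (i + 1) {a} (wedge i (Finsupp.single a 1) z) = 0 := by
  rw [kill_wedge]
  simp [killVec, wedge_zero_left]

theorem kill_singleton_wedge_of_ne {a s : σ} (h : s ≠ a) (i : ℕ) (z : Term A σ i) :
    kill (i + 1) {a} (wedge i (Finsupp.single s 1) z) =
      wedge i (Finsupp.single s 1) (kill i {a} z) := by
  rw [kill_wedge]
  simp [killVec, h]

theorem kill_univ_succ (i : ℕ) (z : Term A σ (i + 1)) : kill (i + 1) Set.univ z = 0 := by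
  suffices kill (i + 1) Set.univ = (0 : Term A σ (i + 1) →ₗ[A] _) from LinearMap.congr_fun this z
  refine hom_ext_wedge_single fun s z => ?_
  rw [kill_wedge, killVec_univ, LinearMap.zero_apply, wedge_zero_left]
  rfl

theorem kill_univ_zero (z : Term A σ 0) {φ : Term A σ 0 →ₗ[A] A}
    (hφ : ∀ (v : Fin 0 → (σ →₀ A)) (y : MvPolynomial σ A),
      φ (wedgeGen A (σ →₀ A) 0 v ⊗ₜ[A] y) = constantCoeff y) :
    kill 0 Set.univ z = φ z • (wedgeGen A (σ →₀ A) 0 Fin.elim0 ⊗ₜ[A] 1) := by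
  induction z using term_induction with
  | zero => simp
  | add z w hz hw => simp only [map_add, hz, hw, add_smul]
  | gen v y =>
    rw [kill_wedgeGen, hφ, killVar_univ, ← TensorProduct.tmul_smul, smul_eq_C_mul, mul_one,
      Subsingleton.elim (_ ∘ v) Fin.elim0]

namespace IsKoszulDifferential

variable {d : ∀ i : ℕ, Term A σ (i + 1) →ₗ[A] Term A σ i}

theorem wedge_zero (hd : IsKoszulDifferential d) (x : σ →₀ A) (z : Term A σ 0) :
    d 0 (wedge 0 x z) = mulP 0 (toPoly x) z := by
  induction z using term_induction with
  | zero => simp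
  | add z w hz hw => simp only [map_add, hz, hw]
  | gen v y =>
    rw [wedge_tmul, wedgeLeft_wedgeGen, hd, mulP_tmul]
    simp [Subsingleton.elim _ v]

theorem wedge_succ (hd : IsKoszulDifferential d) (i : ℕ) (x : σ →₀ A) (z : Term A σ (i + 1)) :
    d (i + 1) (wedge (i + 1) x z) = mulP (i + 1) (toPoly x) z - wedge i x (d i z) := by
  induction z using term_induction with
  | zero => simp
  | add z w hz hw => simp only [map_add, hz, hw]; abel
  | gen v y =>
    have hcomp : ∀ k : Fin (i + 1), (Fin.cons x v : Fin (i + 2) → σ →₀ A) ∘ k.succ.succAbove =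
        Fin.cons x (v ∘ k.succAbove) := fun k => by
      funext j
      refine Fin.cases ?_ (fun j => ?_) j <;> simp
    rw [wedge_tmul, wedgeLeft_wedgeGen, hd, mulP_tmul, Fin.sum_univ_succ, hd, map_sum,
      sub_eq_add_neg, ← Finset.sum_neg_distrib]
    congr 1
    · simp [Function.comp_def]
    · refine Finset.sum_congr rfl fun k _ => ?_
      rw [hcomp, map_zsmul, wedge_tmul, wedgeLeft_wedgeGen, Fin.cons_succ, Fin.val_succ,
        pow_succ, mul_neg_one, neg_smul]

theorem map_mulP (hd : IsKoszulDifferential d) (i : ℕ) (p : MvPolynomial σ A)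
    (z : Term A σ (i + 1)) :
    d i (mulP (i + 1) p z) = mulP i p (d i z) := by
  induction z using term_induction with
  | zero => simp
  | add z w hz hw => simp only [map_add, hz, hw]
  | gen v y =>
    rw [mulP_tmul, hd, hd, map_sum]
    refine Finset.sum_congr rfl fun k _ => ?_
    rw [map_zsmul, mulP_tmul, mul_left_comm]

theorem map_kill (hd : IsKoszulDifferential d) (i : ℕ) (T : Set σ) (z : Term A σ (i + 1)) :
    d i (kill (i + 1) T z) = kill i T (d i z) := by
  induction z using term_induction with
  | zero => simp
  | add z w hz hw => simp only [map_add, hz, hw]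
  | gen v y =>
    rw [kill_wedgeGen, hd, hd, map_sum]
    refine Finset.sum_congr rfl fun k _ => ?_
    rw [map_zsmul, kill_wedgeGen, map_mul, killVar_toPoly]
    rfl

theorem comp_self (hd : IsKoszulDifferential d) (i : ℕ) (z : Term A σ (i + 2)) :
    d i (d (i + 1) z) = 0 := by
  suffices d i ∘ₗ d (i + 1) = 0 from LinearMap.congr_fun this z
  induction i with
  | zero =>
    refine hom_ext_wedge_single fun s z => ?_
    rw [LinearMap.comp_apply, hd.wedge_succ, map_sub, hd.wedge_zero, hd.map_mulP, sub_self]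
    rfl
  | succ i ih =>
    refine hom_ext_wedge_single fun s z => ?_
    have hz : d i (d (i + 1) z) = 0 := LinearMap.congr_fun (ih 0) z
    rw [LinearMap.comp_apply, hd.wedge_succ, map_sub, hd.wedge_succ, hd.map_mulP, hz, map_zero,
      sub_zero, sub_self]
    rfl

theorem map_homotopy_zero (hd : IsKoszulDifferential d) (a : σ) (z : Term A σ 0) :
    d 0 (homotopy a 0 z) = z - kill 0 {a} z := by
  rw [homotopy_apply, hd.wedge_zero, toPoly_single]
  induction z using term_induction with
  | zero => simp
  | add z w hz hw => simp only [map_add, hz, hw]; abel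
  | gen v y =>
    rw [coeffMap_tmul, mulP_tmul, kill_wedgeGen, Subsingleton.elim (_ ∘ v) v,
      ← TensorProduct.tmul_sub, eq_sub_of_add_eq (X_mul_divX_add_killVar a y)]

theorem map_homotopy_succ (hd : IsKoszulDifferential d) (a : σ) (i : ℕ) (z : Term A σ (i + 1)) :
    d (i + 1) (homotopy a (i + 1) z) + homotopy a i (d i z) = z - kill (i + 1) {a} z := by
  suffices d (i + 1) ∘ₗ homotopy a (i + 1) + homotopy a i ∘ₗ d i =
    LinearMap.id - kill (i + 1) {a} from LinearMap.congr_fun this z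
  induction i with
  | zero =>
    refine hom_ext_wedge_single fun s z => ?_
    simp only [LinearMap.add_apply, LinearMap.comp_apply, LinearMap.sub_apply, LinearMap.id_apply]
    rw [hd.wedge_zero, toPoly_single]
    obtain rfl | h := eq_or_ne s a
    · rw [homotopy_wedge_self, homotopy_mulP_self, kill_singleton_wedge_self, map_zero, sub_zero]
      exact zero_add _
    · rw [homotopy_wedge, homotopy_mulP_of_ne h, kill_singleton_wedge_of_ne h, map_neg,
        hd.wedge_succ, toPoly_single, hd.map_homotopy_zero, map_sub]
      abel
  | succ i ih =>
    refine hom_ext_wedge_single fun s z => ?_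
    simp only [LinearMap.add_apply, LinearMap.comp_apply, LinearMap.sub_apply, LinearMap.id_apply]
    rw [hd.wedge_succ, toPoly_single, map_sub]
    obtain rfl | h := eq_or_ne s a
    · rw [homotopy_wedge_self, homotopy_mulP_self, kill_singleton_wedge_self, homotopy_wedge_self,
        map_zero, zero_add]
    · have hz : d (i + 1) (homotopy a (i + 1) z) + homotopy a i (d i z) = z - kill (i + 1) {a} z :=
        LinearMap.congr_fun (ih 0) z
      rw [homotopy_wedge, homotopy_mulP_of_ne h, kill_singleton_wedge_of_ne h, map_neg,
        hd.wedge_succ, toPoly_single, homotopy_wedge, ← map_sub (wedge (i + 1) _), ← hz, map_add]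
      abel

theorem sub_kill_mem_range_zero (hd : IsKoszulDifferential d) (T : Finset σ) (z : Term A σ 0) :
    z - kill 0 T z ∈ LinearMap.range (d 0) := by
  classical
  induction T using Finset.induction_on with
  | empty => simp [kill_empty]
  | insert a T _ ih =>
    have h := hd.map_homotopy_zero a (kill 0 T z)
    rw [kill_kill, Set.singleton_union] at h
    rw [Finset.coe_insert, ← sub_add_sub_cancel z (kill 0 T z), ← h]
    exact add_mem ih (LinearMap.mem_range_self _ _)

theorem sub_kill_mem_range_succ (hd : IsKoszulDifferential d) (T : Finset σ)
    {i : ℕ} {z : Term A σ (i + 1)} (hz : d i z = 0) :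
    z - kill (i + 1) T z ∈ LinearMap.range (d (i + 1)) := by
  classical
  induction T using Finset.induction_on with
  | empty => simp [kill_empty]
  | insert a T _ ih =>
    have h := hd.map_homotopy_succ a i (kill (i + 1) T z)
    rw [kill_kill, Set.singleton_union, hd.map_kill, hz, map_zero, map_zero, add_zero] at h
    rw [Finset.coe_insert, ← sub_add_sub_cancel z (kill (i + 1) T z), ← h]
    exact add_mem ih (LinearMap.mem_range_self _ _)

theorem ker_eq_range (hd : IsKoszulDifferential d) (i : ℕ) :
    LinearMap.ker (d i) = LinearMap.range (d (i + 1)) := by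
  refine le_antisymm (fun z hz => ?_) ?_
  · obtain ⟨T, hT⟩ := exists_finset_kill_eq (i + 1) z
    simpa [hT T subset_rfl, kill_univ_succ] using hd.sub_kill_mem_range_succ T hz
  · rintro _ ⟨z, rfl⟩
    exact hd.comp_self i z

theorem ker_augmentation_eq_range (hd : IsKoszulDifferential d) {φ : Term A σ 0 →ₗ[A] A}
    (hφ : ∀ (v : Fin 0 → (σ →₀ A)) (y : MvPolynomial σ A),
      φ (wedgeGen A (σ →₀ A) 0 v ⊗ₜ[A] y) = constantCoeff y) :
    LinearMap.ker φ = LinearMap.range (d 0) := by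
  refine le_antisymm (fun z hz => ?_) ?_
  · obtain ⟨T, hT⟩ := exists_finset_kill_eq 0 z
    have h := hd.sub_kill_mem_range_zero T z
    rwa [hT T subset_rfl, kill_univ_zero z hφ, LinearMap.mem_ker.mp hz, zero_smul,
      sub_zero] at h
  · rw [LinearMap.range_le_ker_iff]
    refine hom_ext_wedge_single fun s z => ?_
    rw [LinearMap.comp_apply, hd.wedge_zero, toPoly_single, LinearMap.zero_apply]
    induction z using term_induction with
    | zero => simp
    | add z w hz hw => simp only [map_add, hz, hw, add_zero]
    | gen v y => rw [mulP_tmul, hφ, map_mul, constantCoeff_X, zero_mul]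

end IsKoszulDifferential

end KoszulPolynomial

/-- Let `A` be a commutative ring, `σ` a type, `P = A[Xα : α ∈ σ]` the
polynomial ring, `L` the free `A`-module on `σ`, and `ι : L → P` the `A`-linear map sending
the basis vector `eα` to `Xα`.  Consider the Koszul-type complex `K(L, P)` with terms
`K(L,P)ᵢ = ⋀ᴬⁱ L ⊗_A P` and the differential determined on generators by
`∂((x₁∧…∧xᵢ) ⊗ y) = Σₖ (−1)^{k+1} (x₁∧…∧x̂ₖ∧…∧xᵢ) ⊗ ι(xₖ)·y`.
Then `K(L,P)` is a resolution of `A`: the constant-term map `P → A` induces an isomorphism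
`H₀(K(L,P)) ≅ A` (i.e. the induced augmentation `φ : K(L,P)₀ → A` is surjective with kernel
exactly the image of `∂₀`), and `Hᵢ(K(L,P)) = 0` for every `i ≥ 1`. -/
theorem koszul_complex_polynomial_resolution
    (A : Type*) [CommRing A] (σ : Type*)
    (dK : ∀ i : ℕ,
      (ExtPow A (σ →₀ A) (i+1) ⊗[A] MvPolynomial σ A) →ₗ[A]
        (ExtPow A (σ →₀ A) i ⊗[A] MvPolynomial σ A))
    (hdK : ∀ (i : ℕ) (x : Fin (i+1) → (σ →₀ A)) (y : MvPolynomial σ A),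
      dK i (wedgeGen A (σ →₀ A) (i+1) x ⊗ₜ[A] y) =
        ∑ k : Fin (i+1), (-1 : ℤ) ^ (k : ℕ) •
          (wedgeGen A (σ →₀ A) i (x ∘ k.succAbove) ⊗ₜ[A]
            (Finsupp.linearCombination A (fun α => MvPolynomial.X α) (x k) * y)))
    (φ : (ExtPow A (σ →₀ A) 0 ⊗[A] MvPolynomial σ A) →ₗ[A] A)
    (hφ : ∀ (v : Fin 0 → (σ →₀ A)) (y : MvPolynomial σ A),
      φ (wedgeGen A (σ →₀ A) 0 v ⊗ₜ[A] y) = MvPolynomial.constantCoeff y) :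
    Function.Surjective φ ∧ LinearMap.ker φ = LinearMap.range (dK 0) ∧
      ∀ i : ℕ, LinearMap.ker (dK i) = LinearMap.range (dK (i+1)) := by
  have hd : KoszulPolynomial.IsKoszulDifferential dK := hdK
  refine ⟨fun c => ?_, hd.ker_augmentation_eq_range hφ, hd.ker_eq_range⟩
  exact ⟨wedgeGen A (σ →₀ A) 0 Fin.elim0 ⊗ₜ[A] MvPolynomial.C c, by simp [hφ]⟩
end

section
/- Let A be a commutative ring, σ a type, P = A[X_α : α ∈ σ] the polynomial ring, and L the free A-module on σ with ι : L → P sending the basis vector e_α to X_α. Then for every P-module M and every i ≥ 0 there is a natural isomorphism of A-modules Tor_i^P(A, M) ≅ H_i(K(L, M)), where A is a P-module via evaluation of every variable at 0. -/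
open scoped TensorProduct

universe u

/-- `A` regarded as a module over `P = A[Xα : α ∈ σ]` via the evaluation homomorphism
`P → A` sending every `Xα` to `0` (a type synonym of `A` carrying this module structure). -/
def EvalZero (A : Type u) [CommRing A] (σ : Type u) : Type u := A

instance (A : Type u) [CommRing A] (σ : Type u) : AddCommGroup (EvalZero A σ) :=
  inferInstanceAs (AddCommGroup A)

noncomputable instance (A : Type u) [CommRing A] (σ : Type u) :
    Module (MvPolynomial σ A) (EvalZero A σ) :=
  Module.compHom A (MvPolynomial.aeval (0 : σ → A) : MvPolynomial σ A →ₐ[A] A).toRingHom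

/-- `Tor_i^P(A, M)` for `P = A[Xα : α ∈ σ]`, with `A` a `P`-module via evaluation at `0`. -/
noncomputable def TorPoly (A : Type u) [CommRing A] (σ : Type u) (M : Type u)
    [AddCommGroup M] [Module (MvPolynomial σ A) M] (i : ℕ) : Type u :=
  ↥(((CategoryTheory.Tor (ModuleCat.{u} (MvPolynomial σ A)) i).obj
      (ModuleCat.of (MvPolynomial σ A) (EvalZero A σ))).obj
    (ModuleCat.of (MvPolynomial σ A) M))

noncomputable instance (A : Type u) [CommRing A] (σ : Type u) (M : Type u)
    [AddCommGroup M] [Module (MvPolynomial σ A) M] (i : ℕ) :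
    AddCommGroup (TorPoly A σ M i) :=
  inferInstanceAs (AddCommGroup
    ↥(((CategoryTheory.Tor (ModuleCat.{u} (MvPolynomial σ A)) i).obj
        (ModuleCat.of (MvPolynomial σ A) (EvalZero A σ))).obj
      (ModuleCat.of (MvPolynomial σ A) M)))

noncomputable instance (A : Type u) [CommRing A] (σ : Type u) (M : Type u)
    [AddCommGroup M] [Module (MvPolynomial σ A) M] (i : ℕ) :
    Module (MvPolynomial σ A) (TorPoly A σ M i) :=
  inferInstanceAs (Module (MvPolynomial σ A)
    ↥(((CategoryTheory.Tor (ModuleCat.{u} (MvPolynomial σ A)) i).obj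
        (ModuleCat.of (MvPolynomial σ A) (EvalZero A σ))).obj
      (ModuleCat.of (MvPolynomial σ A) M)))

/-- The `A`-module structure on `Tor_i^P(A, M)` obtained by restricting scalars along
`A → P`. -/
noncomputable instance (A : Type u) [CommRing A] (σ : Type u) (M : Type u)
    [AddCommGroup M] [Module (MvPolynomial σ A) M] (i : ℕ) :
    Module A (TorPoly A σ M i) :=
  Module.compHom _ (algebraMap A (MvPolynomial σ A))

namespace Koszul

open MvPolynomial

section Differential

variable {A : Type*} [CommRing A] {L : Type*} [AddCommGroup L] [Module A L]

/-- `wedgeGen` as an alternating map. -/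
noncomputable def wedge (n : ℕ) : L [⋀^Fin n]→ₗ[A] ExtPow A L n :=
  exteriorPower.ιMulti A n

/-- The linear map out of an exterior power induced by an alternating map. -/
noncomputable def extLift {N : Type*} [AddCommGroup N] [Module A N] {n : ℕ}
    (f : L [⋀^Fin n]→ₗ[A] N) : ExtPow A L n →ₗ[A] N :=
  exteriorPower.alternatingMapLinearEquiv f

@[simp]
theorem extLift_wedge {N : Type*} [AddCommGroup N] [Module A N] {n : ℕ}
    (f : L [⋀^Fin n]→ₗ[A] N) (v : Fin n → L) : extLift f (wedge n v) = f v :=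
  exteriorPower.alternatingMapLinearEquiv_apply_ιMulti f v

theorem span_wedge (n : ℕ) :
    Submodule.span A (Set.range (wedge (A := A) (L := L) n)) = ⊤ :=
  exteriorPower.ιMulti_span A n L

theorem tensor_induction {M : Type*} [AddCommGroup M] [Module A M] {n : ℕ}
    {p : ExtPow A L n ⊗[A] M → Prop} (zero : p 0)
    (wedge_tmul : ∀ (v : Fin n → L) (y : M), p (wedge n v ⊗ₜ[A] y))
    (add : ∀ z w, p z → p w → p (z + w)) (z : ExtPow A L n ⊗[A] M) : p z := by
  induction z with
  | zero => exact zero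
  | add z w hz hw => exact add z w hz hw
  | tmul x y =>
    have hx : x ∈ Submodule.span A (Set.range (wedge (A := A) (L := L) n)) := by
      rw [span_wedge]; trivial
    induction hx using Submodule.span_induction generalizing y with
    | mem x hx => obtain ⟨v, rfl⟩ := hx; exact wedge_tmul v y
    | zero => simpa using zero
    | add x x' _ _ h h' => rw [TensorProduct.add_tmul]; exact add _ _ (h y) (h' y)
    | smul a x _ h => rw [TensorProduct.smul_tmul]; exact h _

theorem hom_ext {M N : Type*} [AddCommGroup M] [Module A M] [AddCommGroup N] [Module A N] {n : ℕ}
    {f g : ExtPow A L n ⊗[A] M →ₗ[A] N}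
    (h : ∀ (v : Fin n → L) (y : M), f (wedge n v ⊗ₜ[A] y) = g (wedge n v ⊗ₜ[A] y)) : f = g := by
  ext1
  refine LinearMap.ext fun x ↦ LinearMap.ext fun y ↦ ?_
  show f (x ⊗ₜ y) = g (x ⊗ₜ y)
  refine tensor_induction (p := fun z ↦ f z = g z) (by simp) h (fun z w hz hw ↦ ?_) _
  rw [map_add, map_add, hz, hw]

variable {P : Type*} [CommRing P] [Algebra A P] (ι : L →ₗ[A] P)
  (M : Type*) [AddCommGroup M] [Module P M] [Module A M] [IsScalarTower A P M]

/-- The map `x, v, y ↦ v₁ ∧ … ∧ vₙ ⊗ ι(x) y`. -/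
noncomputable def wedgeSMul (n : ℕ) :
    L →ₗ[A] L [⋀^Fin n]→ₗ[A] (M →ₗ[A] ExtPow A L n ⊗[A] M) where
  toFun x := (LinearMap.lcomp A _ (Algebra.lsmul A A M (ι x))).compAlternatingMap
    ((TensorProduct.mk A _ M).compAlternatingMap (wedge n))
  map_add' x y := by ext v m; simp [TensorProduct.tmul_add]
  map_smul' a x := by ext v m; simp

@[simp]
theorem wedgeSMul_apply (n : ℕ) (x : L) (v : Fin n → L) (y : M) :
    wedgeSMul ι M n x v y = wedge n v ⊗ₜ[A] (ι x • y) := rfl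

/-- The Koszul differential. -/
noncomputable def d (n : ℕ) : ExtPow A L (n + 1) ⊗[A] M →ₗ[A] ExtPow A L n ⊗[A] M :=
  TensorProduct.lift (extLift (AlternatingMap.alternatizeUncurryFin (wedgeSMul ι M n)))

theorem d_wedge_tmul (n : ℕ) (v : Fin (n + 1) → L) (y : M) :
    d ι M n (wedge (n + 1) v ⊗ₜ[A] y) =
      ∑ k : Fin (n + 1), (-1 : ℤ) ^ (k : ℕ) • (wedge n (k.removeNth v) ⊗ₜ[A] (ι (v k) • y)) := by
  simp [d, AlternatingMap.alternatizeUncurryFin_apply, LinearMap.sum_apply]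

theorem d_comp_d (n : ℕ) : d ι M n ∘ₗ d ι M (n + 1) = 0 := by
  let f : L →ₗ[A] L →ₗ[A] L [⋀^Fin n]→ₗ[A] (M →ₗ[A] ExtPow A L n ⊗[A] M) :=
    LinearMap.mk₂ A (fun a b ↦ (LinearMap.lcomp A _ (Algebra.lsmul A A M (ι a))).compAlternatingMap
        (wedgeSMul ι M n b))
      (fun _ _ _ ↦ by ext; simp [TensorProduct.tmul_add])
      (fun _ _ _ ↦ by ext; simp)
      (fun _ _ _ ↦ by ext; simp)
      (fun _ _ _ ↦ by ext; simp)
  have hf : ∀ a b, f a b = f b a := fun a b ↦ by ext; simp [f, smul_smul, mul_comm]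
  refine hom_ext fun v y ↦ ?_
  have := LinearMap.congr_fun (DFunLike.congr_fun
    (AlternatingMap.alternatizeUncurryFin_alternatizeUncurryFinLM_comp_of_symmetric hf) v) y
  simpa [AlternatingMap.alternatizeUncurryFin_apply, LinearMap.sum_apply, d_wedge_tmul, f]
    using this

variable {M} in
theorem lTensor_d {N : Type*} [AddCommGroup N] [Module P N] [Module A N] [IsScalarTower A P N]
    (f : M →ₗ[P] N) (n : ℕ) :
    (f.restrictScalars A).lTensor _ ∘ₗ d ι M n = d ι N n ∘ₗ (f.restrictScalars A).lTensor _ :=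
  hom_ext fun v y ↦ by simp [d_wedge_tmul]

end Differential

section Homotopy

theorem alternatingMap_sub_smul {A L N : Type*} [CommRing A] [AddCommGroup L] [Module A L]
    [AddCommGroup N] [Module A N] {n : ℕ} (g : L [⋀^Fin n]→ₗ[A] N) (v : Fin n → L)
    (c : Fin n → A) (e : L) :
    g (fun k ↦ v k - c k • e) = g v - ∑ k, c k • g (Function.update v k e) := by
  induction n with
  | zero =>
    simp only [Finset.univ_eq_empty, Finset.sum_empty, sub_zero]
    exact congrArg g (Subsingleton.elim _ _)
  | succ n ih =>
    have hcons : ∀ (x : L) (w : Fin n → L), g (Fin.cons x w) = g.curryLeft x w := fun _ _ ↦ rfl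
    have hlhs : (fun k ↦ v k - c k • e) =
        Fin.cons (v 0 - c 0 • e) (fun k : Fin n ↦ v k.succ - c k.succ • e) := by
      ext k; refine Fin.cases ?_ (fun _ ↦ ?_) k <;> simp
    have hv : g v = g.curryLeft (v 0) (Fin.tail v) := by rw [← hcons, Fin.cons_self_tail]
    have hz : Function.update v 0 e = Fin.cons e (Fin.tail v) := by
      rw [← Fin.cons_self_tail v, Fin.update_cons_zero, Fin.tail_cons]
    have hs : ∀ k : Fin n, Function.update v k.succ e =
        Fin.cons (v 0) (Function.update (Fin.tail v) k e) := fun k ↦ by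
      conv_lhs => rw [← Fin.cons_self_tail v]
      rw [Fin.cons_update]
    have he : ∀ k : Fin n, g.curryLeft e (Function.update (Fin.tail v) k e) = 0 := fun k ↦ by
      rw [← hcons]
      exact g.map_eq_zero_of_eq _ (i := 0) (j := k.succ) (by simp) (Fin.succ_ne_zero k).symm
    have := ih (g.curryLeft (v 0 - c 0 • e)) (Fin.tail v) (Fin.tail c)
    rw [hlhs, hcons, Fin.sum_univ_succ, hz, hcons, hv]
    simp only [hs, hcons]
    refine this.trans ?_
    simp only [map_sub, map_smul, AlternatingMap.sub_apply, AlternatingMap.smul_apply, he,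
      smul_zero, sub_zero]
    exact sub_sub _ _ _

variable {A : Type*} [CommRing A] {σ : Type*}

theorem update_eq_removeNth {L N : Type*} [AddCommGroup L] [Module A L]
    [AddCommGroup N] [Module A N] {n : ℕ} (g : L [⋀^Fin (n + 1)]→ₗ[A] N) (v : Fin (n + 1) → L)
    (k : Fin (n + 1)) (e : L) :
    g (Function.update v k e) = (-1 : ℤ) ^ (k : ℕ) • g (Fin.cons e (k.removeNth v)) := by
  rw [← Fin.insertNth_removeNth, AlternatingMap.map_insertNth]
  rfl

/-- The map `L → P` sending the basis vectors to the variables. -/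
noncomputable abbrev vars (A : Type*) [CommRing A] (σ : Type*) :
    (σ →₀ A) →ₗ[A] MvPolynomial σ A :=
  Finsupp.linearCombination A (fun α ↦ (X α : MvPolynomial σ A))

/-- The projection of the free module that kills the basis vector `e_α`. -/
noncomputable def killVar (α : σ) : (σ →₀ A) →ₗ[A] (σ →₀ A) :=
  LinearMap.id - LinearMap.toSpanSingleton A _ (Finsupp.single α 1) ∘ₗ Finsupp.lapply α

theorem killVar_apply (α : σ) (x : σ →₀ A) :
    killVar α x = x - x α • Finsupp.single α 1 := rfl

/-- The quotient of a polynomial upon division by `X α`. -/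
noncomputable def divX (α : σ) : MvPolynomial σ A →ₗ[A] MvPolynomial σ A where
  toFun f := f.divMonomial (Finsupp.single α 1)
  map_add' f g := add_divMonomial _ _ _
  map_smul' a f := by ext; simp

theorem divX_X_mul_self (α : σ) (f : MvPolynomial σ A) : divX α (X α * f) = f :=
  X_mul_divMonomial _ _

theorem divX_X_mul_of_ne {α β : σ} (h : β ≠ α) (f : MvPolynomial σ A) :
    divX α (X β * f) = X β * divX α f := by
  classical
  ext m
  simp only [divX, LinearMap.coe_mk, AddHom.coe_mk, coeff_divMonomial, coeff_X_mul']
  have hm : (β ∈ (Finsupp.single α 1 + m).support) ↔ β ∈ m.support := by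
    simp [h.symm]
  simp only [hm]
  split_ifs with hβ
  · congr 1
    rw [add_tsub_assoc_of_le]
    simpa [Finsupp.single_le_iff, Nat.one_le_iff_ne_zero] using hβ
  · rfl

theorem divX_vars_mul (α : σ) (x : σ →₀ A) (f : MvPolynomial σ A) :
    divX α (vars A σ x * f) = x α • (f - X α * divX α f) + vars A σ x * divX α f := by
  classical
  induction x using Finsupp.induction_linear with
  | zero => simp
  | add x y hx hy =>
    simp only [map_add, add_mul, hx, hy, Finsupp.add_apply, add_smul]; abel
  | single β a =>
    by_cases h : β = α
    · subst h
      simp [divX_X_mul_self, smul_sub]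
    · simp [divX_X_mul_of_ne h, h]

/-- The contracting operator `v ⊗ f ↦ e_α ∧ v ⊗ (f / X_α)`. -/
noncomputable def homotopy (α : σ) (n : ℕ) :
    ExtPow A (σ →₀ A) n ⊗[A] MvPolynomial σ A →ₗ[A]
      ExtPow A (σ →₀ A) (n + 1) ⊗[A] MvPolynomial σ A :=
  TensorProduct.map (extLift ((wedge (n + 1)).curryLeft (Finsupp.single α 1))) (divX α)

/-- The operator on the Koszul complex that removes everything involving `α`. -/
noncomputable def proj (α : σ) (n : ℕ) :
    ExtPow A (σ →₀ A) n ⊗[A] MvPolynomial σ A →ₗ[A]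
      ExtPow A (σ →₀ A) n ⊗[A] MvPolynomial σ A :=
  TensorProduct.map (extLift ((wedge n).compLinearMap (killVar α)))
    (LinearMap.id - LinearMap.mulLeft A (X α) ∘ₗ divX α)

theorem homotopy_wedge_tmul (α : σ) (n : ℕ) (v : Fin n → (σ →₀ A)) (f : MvPolynomial σ A) :
    homotopy α n (wedge n v ⊗ₜ[A] f) =
      wedge (n + 1) (Fin.cons (Finsupp.single α 1) v) ⊗ₜ[A] divX α f := by
  rw [homotopy, TensorProduct.map_tmul, extLift_wedge]; rfl

theorem proj_wedge_tmul (α : σ) (n : ℕ) (v : Fin n → (σ →₀ A)) (f : MvPolynomial σ A) :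
    proj α n (wedge n v ⊗ₜ[A] f) =
      wedge n (fun k ↦ killVar α (v k)) ⊗ₜ[A] (f - X α * divX α f) := by
  rw [proj, TensorProduct.map_tmul, extLift_wedge]; rfl

theorem wedge_killVar (α : σ) (n : ℕ) (v : Fin (n + 1) → (σ →₀ A)) :
    wedge (A := A) (n + 1) (fun k ↦ killVar α (v k)) = wedge (n + 1) v -
      ∑ k, v k α • (-1 : ℤ) ^ (k : ℕ) •
        wedge (n + 1) (Fin.cons (Finsupp.single α 1) (k.removeNth v)) := by
  simp only [killVar_apply, alternatingMap_sub_smul _ v (fun k ↦ v k α), update_eq_removeNth]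

theorem homotopy_formula (α : σ) (n : ℕ)
    (z : ExtPow A (σ →₀ A) (n + 1) ⊗[A] MvPolynomial σ A) :
    d (vars A σ) _ (n + 1) (homotopy α (n + 1) z) + homotopy α n (d (vars A σ) _ n z) =
      z - proj α (n + 1) z := by
  induction z using tensor_induction with
  | zero => simp
  | add z w hz hw =>
    simp only [map_add]
    rw [add_sub_add_comm, ← hz, ← hw]; abel
  | wedge_tmul v f =>
    have hr : ∀ k : Fin (n + 1), (k.succ.removeNth
        (Fin.cons (Finsupp.single α 1) v : Fin (n + 2) → (σ →₀ A)) : Fin (n + 1) → (σ →₀ A)) =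
        Fin.cons (Finsupp.single α 1) (k.removeNth v) := fun k ↦ by
      ext1 j; refine Fin.cases ?_ (fun _ ↦ ?_) j <;> simp [Fin.removeNth]
    have h0 : (Fin.removeNth 0
        (Fin.cons (Finsupp.single α 1) v : Fin (n + 2) → (σ →₀ A)) : Fin (n + 1) → (σ →₀ A)) = v :=
      by ext1 j; simp [Fin.removeNth]
    rw [homotopy_wedge_tmul, d_wedge_tmul, d_wedge_tmul, proj_wedge_tmul, wedge_killVar,
      Fin.sum_univ_succ, map_sum]
    simp only [map_zsmul, homotopy_wedge_tmul, hr, h0, Fin.cons_succ, Fin.cons_zero, smul_eq_mul,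
      divX_vars_mul, TensorProduct.tmul_add, smul_add, Finset.sum_add_distrib,
      TensorProduct.sub_tmul, TensorProduct.sum_tmul, Fin.val_succ, pow_succ, Fin.val_zero,
      pow_zero, one_smul, mul_neg, mul_one, neg_smul, Finset.sum_neg_distrib]
    have hα : vars A σ (Finsupp.single α 1) = X α := by simp
    have hs : ∀ k : Fin (n + 1), (v k α • (-1 : ℤ) ^ (k : ℕ) •
        wedge (A := A) (n + 1) (Fin.cons (Finsupp.single α 1) (k.removeNth v))) ⊗ₜ[A]
          (f - X α * divX α f) = (-1 : ℤ) ^ (k : ℕ) •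
        wedge (A := A) (n + 1) (Fin.cons (Finsupp.single α 1) (k.removeNth v)) ⊗ₜ[A]
          (v k α • (f - X α * divX α f)) := fun k ↦ by
      rw [TensorProduct.smul_tmul, TensorProduct.smul_tmul']
    simp only [hα, hs, TensorProduct.tmul_sub (wedge (n + 1) v)]
    abel

/-- The composite of the operators `proj α` for `α` in a list. -/
noncomputable def projList (n : ℕ) (l : List σ) :
    ExtPow A (σ →₀ A) n ⊗[A] MvPolynomial σ A →ₗ[A]
      ExtPow A (σ →₀ A) n ⊗[A] MvPolynomial σ A :=
  l.foldr (fun α p ↦ p ∘ₗ proj α n) LinearMap.id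

theorem sub_projList_mem_range (n : ℕ) (l : List σ)
    (z : ExtPow A (σ →₀ A) (n + 1) ⊗[A] MvPolynomial σ A) (hz : d (vars A σ) _ n z = 0) :
    z - projList (n + 1) l z ∈ LinearMap.range (d (vars A σ) (MvPolynomial σ A) (n + 1)) := by
  induction l generalizing z with
  | nil => simp [projList]
  | cons α l ih =>
    have h := homotopy_formula α n z
    rw [hz, map_zero, add_zero] at h
    have hp : d (vars A σ) _ n (proj α (n + 1) z) = 0 := by
      have h' := congrArg (d (vars A σ) (MvPolynomial σ A) n) h
      rw [← LinearMap.comp_apply, d_comp_d, LinearMap.zero_apply, map_sub, hz, zero_sub] at h'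
      simpa using h'.symm
    have : z - projList (n + 1) (α :: l) z =
        (z - proj α (n + 1) z) + (proj α (n + 1) z - projList (n + 1) l (proj α (n + 1) z)) := by
      simp [projList]
    rw [this]
    exact add_mem (h ▸ LinearMap.mem_range_self _ _) (ih _ hp)

theorem projList_wedge_tmul_eq_zero (n : ℕ) (l : List σ) (v : Fin (n + 1) → (σ →₀ A))
    (f : MvPolynomial σ A) (hv : ∀ α, v 0 α ≠ 0 → α ∈ l) :
    projList (n + 1) l (wedge (n + 1) v ⊗ₜ[A] f) = 0 := by
  induction l generalizing v f with
  | nil =>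
    have h0 : v 0 = 0 := Finsupp.ext fun α ↦ by simpa using mt (hv α)
    simp [projList, (wedge (A := A) (n + 1)).map_coord_zero 0 h0]
  | cons β l ih =>
    have : projList (n + 1) (β :: l) (wedge (n + 1) v ⊗ₜ[A] f) =
        projList (n + 1) l (proj β (n + 1) (wedge (n + 1) v ⊗ₜ[A] f)) := rfl
    rw [this, proj_wedge_tmul]
    refine ih _ _ fun α hα ↦ ?_
    by_cases hαβ : α = β
    · subst hαβ; simp [killVar_apply] at hα
    · have : v 0 α ≠ 0 := by simpa [killVar_apply, Finsupp.single_apply, Ne.symm hαβ] using hα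
      simpa [hαβ] using hv α this

theorem exists_projList_eq_zero (n : ℕ) (z : ExtPow A (σ →₀ A) (n + 1) ⊗[A] MvPolynomial σ A) :
    ∃ t : Finset σ, ∀ l : List σ, (∀ α ∈ t, α ∈ l) → projList (n + 1) l z = 0 := by
  classical
  induction z using tensor_induction with
  | zero => exact ⟨∅, by simp⟩
  | add z w hz hw =>
    obtain ⟨s, hs⟩ := hz
    obtain ⟨t, ht⟩ := hw
    refine ⟨s ∪ t, fun l hl ↦ ?_⟩
    rw [map_add, hs l fun α h ↦ hl α (Finset.mem_union_left _ h),
      ht l fun α h ↦ hl α (Finset.mem_union_right _ h), add_zero]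
  | wedge_tmul v f =>
    exact ⟨(v 0).support, fun l hl ↦ projList_wedge_tmul_eq_zero n l v f fun α h ↦
      hl α (Finsupp.mem_support_iff.2 h)⟩

theorem exact_d_self (n : ℕ) (z : ExtPow A (σ →₀ A) (n + 1) ⊗[A] MvPolynomial σ A)
    (hz : d (vars A σ) _ n z = 0) :
    z ∈ LinearMap.range (d (vars A σ) (MvPolynomial σ A) (n + 1)) := by
  obtain ⟨t, ht⟩ := exists_projList_eq_zero n z
  have := sub_projList_mem_range n t.toList z hz
  rwa [ht _ fun α h ↦ Finset.mem_toList.2 h, sub_zero] at this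

theorem exact_d_of_projective {M : Type*} [AddCommGroup M] [Module (MvPolynomial σ A) M]
    [Module A M] [IsScalarTower A (MvPolynomial σ A) M] [Module.Projective (MvPolynomial σ A) M]
    (n : ℕ) : Function.Exact (d (vars A σ) M (n + 1)) (d (vars A σ) M n) := by
  classical
  refine fun z ↦ ⟨fun hz ↦ ?_, ?_⟩
  · obtain ⟨s, hs⟩ := Module.projective_def'.1 ‹Module.Projective (MvPolynomial σ A) M›
    let f (m : M) : M →ₗ[MvPolynomial σ A] MvPolynomial σ A := Finsupp.lapply m ∘ₗ s
    let g (m : M) : MvPolynomial σ A →ₗ[MvPolynomial σ A] M := LinearMap.toSpanSingleton _ _ m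
    have hfg : ∀ w : ExtPow A (σ →₀ A) (n + 1) ⊗[A] M, ∃ t : Finset M, ∀ t', t ⊆ t' →
        ∑ m ∈ t', ((g m).restrictScalars A).lTensor _ (((f m).restrictScalars A).lTensor _ w) =
          w := fun w ↦ by
      induction w using tensor_induction with
      | zero => exact ⟨∅, by simp⟩
      | add z w hz hw =>
        obtain ⟨t₁, h₁⟩ := hz
        obtain ⟨t₂, h₂⟩ := hw
        refine ⟨t₁ ∪ t₂, fun t' ht ↦ ?_⟩
        simp only [map_add, Finset.sum_add_distrib]
        rw [h₁ _ (Finset.union_subset_left ht), h₂ _ (Finset.union_subset_right ht)]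
      | wedge_tmul v y =>
        refine ⟨(s y).support, fun t' ht ↦ ?_⟩
        simp only [LinearMap.lTensor_tmul, ← TensorProduct.tmul_sum]
        congr 1
        have := LinearMap.congr_fun hs y
        rw [LinearMap.comp_apply, Finsupp.linearCombination_apply,
          Finsupp.sum_of_support_subset _ ht _ (by simp)] at this
        simpa [f, g] using this
    obtain ⟨t, ht⟩ := hfg z
    have key : ∑ m ∈ t, ((g m).restrictScalars A).lTensor _
        (((f m).restrictScalars A).lTensor _ z) ∈ LinearMap.range (d (vars A σ) M (n + 1)) := by
      refine sum_mem fun m _ ↦ ?_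
      obtain ⟨w, hw⟩ := exact_d_self n (((f m).restrictScalars A).lTensor _ z) (by
        rw [← LinearMap.comp_apply, ← lTensor_d, LinearMap.comp_apply, hz, map_zero])
      rw [← hw, ← LinearMap.comp_apply, lTensor_d]
      exact LinearMap.mem_range_self _ _
    rwa [ht t subset_rfl] at key
  · rintro ⟨w, rfl⟩
    exact LinearMap.congr_fun (d_comp_d (vars A σ) M n) w

end Homotopy

section DimensionShifting

open CategoryTheory Limits

universe v₁ v₂ u₁ u₂

variable {C : Type u₁} [Category.{v₁} C] [Abelian C] {D : Type u₂} [Category.{v₂} D] [Abelian D]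

theorem fromOpcycles_pOpcycles (K : ChainComplex C ℕ) (n : ℕ) :
    K.fromOpcycles (n + 1) n ≫ K.pOpcycles n = 0 := by
  rw [← cancel_epi (K.pOpcycles (n + 1))]
  simp

theorem shortExact_opcycles (K : ChainComplex C ℕ) (n : ℕ) (hK : K.ExactAt (n + 1)) :
    (ShortComplex.mk _ _ (fromOpcycles_pOpcycles K n)).ShortExact where
  exact := by
    have h : (ShortComplex.mk _ _ (K.d_pOpcycles (n + 1) n)).Exact :=
      ShortComplex.exact_of_g_is_cokernel _ (K.opcyclesIsCokernel (n + 1) n (by simp))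
    let φ : ShortComplex.mk _ _ (K.d_pOpcycles (n + 1) n) ⟶
        ShortComplex.mk _ _ (fromOpcycles_pOpcycles K n) :=
      { τ₁ := K.pOpcycles (n + 1), τ₂ := 𝟙 _, τ₃ := 𝟙 _ }
    have : Epi φ.τ₁ := inferInstanceAs (Epi (K.pOpcycles (n + 1)))
    have : IsIso φ.τ₂ := inferInstanceAs (IsIso (𝟙 _))
    have : Mono φ.τ₃ := inferInstanceAs (Mono (𝟙 _))
    exact (ShortComplex.exact_iff_of_epi_of_isIso_of_mono φ).1 h
  mono_f := by
    have hz : IsZero (K.homology (n + 1)) := hK.isZero_homology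
    exact Preadditive.mono_of_isZero_kernel' _ (K.homologyIsKernel (n + 1) n (by simp)) hz
  epi_g := inferInstanceAs (Epi (K.pOpcycles n))

/-- The connecting isomorphism of a short exact sequence of complexes with acyclic middle term. -/
noncomputable def connectingIso {S : ShortComplex (ChainComplex D ℕ)} (hS : S.ShortExact) (n : ℕ)
    (h₁ : S.X₂.ExactAt (n + 1)) (h₂ : S.X₂.ExactAt n) :
    S.X₃.homology (n + 1) ≅ S.X₁.homology n :=
  have : Mono (hS.δ (n + 1) n rfl) :=
    (hS.homology_exact₃ (n + 1) n rfl).mono_g (h₁.isZero_homology.eq_of_src _ _)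
  have : Epi (hS.δ (n + 1) n rfl) :=
    (hS.homology_exact₁ (n + 1) n rfl).epi_f (h₂.isZero_homology.eq_of_tgt _ _)
  have := isIso_of_mono_of_epi (hS.δ (n + 1) n rfl)
  asIso (hS.δ (n + 1) n rfl)

/-- The connecting morphism to degree zero identifies the first homology with a kernel. -/
noncomputable def connectingKernelIso {S : ShortComplex (ChainComplex D ℕ)} (hS : S.ShortExact)
    (h₁ : S.X₂.ExactAt 1) :
    S.X₃.homology 1 ≅ kernel (HomologicalComplex.homologyMap S.f 0) :=
  have : Mono (hS.δ 1 0 rfl) :=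
    (hS.homology_exact₃ 1 0 rfl).mono_g (h₁.isZero_homology.eq_of_src _ _)
  have : Mono (ShortComplex.mk _ _ (hS.δ_comp 1 0 rfl)).f := this
  (hS.homology_exact₁ 1 0 rfl).fIsKernel.conePointUniqueUpToIso (limit.isLimit _)

/-- For a right exact functor `F`, the homology of `F(K)` is a kernel on `F` of the
opcycles of `K`. -/
noncomputable def mapHomologyKernelIso (F : C ⥤ D) [F.Additive] [PreservesFiniteColimits F]
    (K : ChainComplex C ℕ) (n : ℕ) :
    ((F.mapHomologicalComplex _).obj K).homology (n + 1) ≅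
      kernel (F.map (K.fromOpcycles (n + 1) n)) :=
  let FK := (F.mapHomologicalComplex (ComplexShape.down ℕ)).obj K
  let hc := CokernelCofork.mapIsColimit _ (K.opcyclesIsCokernel (n + 2) (n + 1) (by simp)) F
  let i : FK.opcycles (n + 1) ≅ F.obj (K.opcycles (n + 1)) :=
    (FK.opcyclesIsCokernel (n + 2) (n + 1) (by simp)).coconePointUniqueUpToIso hc
  have hi : FK.pOpcycles (n + 1) ≫ i.hom = F.map (K.pOpcycles (n + 1)) :=
    (FK.opcyclesIsCokernel (n + 2) (n + 1) (by simp)).comp_coconePointUniqueUpToIso_hom hc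
      WalkingParallelPair.one
  (FK.homologyIsKernel (n + 1) n (by simp)).conePointUniqueUpToIso (limit.isLimit _) ≪≫
    kernel.mapIso _ _ i (Iso.refl _) (by
      rw [← cancel_epi (FK.pOpcycles (n + 1)), reassoc_of% hi]
      refine Eq.trans ?_ (F.map_comp _ _)
      rw [K.p_fromOpcycles]
      exact (congrArg _ (Category.comp_id _)).trans (FK.p_fromOpcycles _ _))

theorem nonempty_homology_iso_of_exact
    (F : C ⥤ D) [F.Additive] [PreservesFiniteColimits F]
    (T : C ⥤ ChainComplex D ℕ) [T.PreservesZeroMorphisms]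
    (hT : ∀ S : ShortComplex C, S.ShortExact → (S.map T).ShortExact)
    (hP : ∀ (Q : C) [Projective Q] (n : ℕ), (T.obj Q).ExactAt (n + 1))
    (e : T ⋙ HomologicalComplex.homologyFunctor D _ 0 ≅ F)
    (K : ChainComplex C ℕ) (hK : ∀ n, K.ExactAt (n + 1))
    (hproj : ∀ n, Projective (K.X n)) (n m : ℕ) :
    Nonempty ((T.obj (K.opcycles m)).homology (n + 1) ≅
      ((F.mapHomologicalComplex _).obj K).homology (m + n + 1)) := by
  induction n generalizing m with
  | zero =>
    have hS := hT _ (shortExact_opcycles K m (hK m))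
    exact ⟨connectingKernelIso hS (hP (K.X m) 0) ≪≫
      kernel.mapIso _ _ (e.app _) (e.app _) (e.hom.naturality (K.fromOpcycles (m + 1) m)) ≪≫
      (mapHomologyKernelIso F K m).symm⟩
  | succ n ih =>
    have hS := hT _ (shortExact_opcycles K m (hK m))
    obtain ⟨i⟩ := ih (m + 1)
    exact ⟨connectingIso hS (n + 1) (hP (K.X m) _) (hP (K.X m) _) ≪≫ i ≪≫
      eqToIso (congrArg (fun k ↦ HomologicalComplex.homology _ k) (by omega))⟩

/-- An exact family of complexes that is acyclic on projectives computes derived functors. -/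
theorem nonempty_homology_iso_of_resolution
    (F : C ⥤ D) [F.Additive] [PreservesFiniteColimits F]
    (T : C ⥤ ChainComplex D ℕ) [T.PreservesZeroMorphisms]
    (hT : ∀ S : ShortComplex C, S.ShortExact → (S.map T).ShortExact)
    (hP : ∀ (Q : C) [Projective Q] (n : ℕ), (T.obj Q).ExactAt (n + 1))
    (e : T ⋙ HomologicalComplex.homologyFunctor D _ 0 ≅ F)
    {X : C} (R : ProjectiveResolution X) (n : ℕ) :
    Nonempty ((T.obj X).homology (n + 1) ≅
      ((F.mapHomologicalComplex _).obj R.complex).homology (n + 1)) := by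
  obtain ⟨i⟩ := nonempty_homology_iso_of_exact F T hT hP e R.complex R.complex_exactAt_succ
    R.projective n 0
  let j : X ≅ R.complex.opcycles 0 :=
    R.isColimitCokernelCofork.coconePointUniqueUpToIso
      (R.complex.opcyclesIsCokernel 1 0 (by simp))
  exact ⟨(T ⋙ HomologicalComplex.homologyFunctor D _ (n + 1)).mapIso j ≪≫ i ≪≫
    eqToIso (congrArg (fun k ↦ HomologicalComplex.homology _ k) (by omega))⟩

end DimensionShifting

section Augmentation

variable {A : Type u} [CommRing A] {σ : Type u} (M : Type u) [AddCommGroup M]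
  [Module (MvPolynomial σ A) M] [Module A M] [IsScalarTower A (MvPolynomial σ A) M]

/-- The identity map from `A` to its type synonym `EvalZero A σ`. -/
def toEvalZero : A ≃+ EvalZero A σ := AddEquiv.refl A

theorem smul_toEvalZero (p : MvPolynomial σ A) (a : A) :
    p • (toEvalZero a : EvalZero A σ) = toEvalZero (aeval (0 : σ → A) p * a) := rfl

theorem wedge_zero_tmul_smul_sub_mem_range (p : MvPolynomial σ A) (v : Fin 0 → (σ →₀ A)) (y : M) :
    wedge 0 v ⊗ₜ[A] (p • y) - wedge 0 v ⊗ₜ[A] ((aeval (0 : σ → A) p : A) • y) ∈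
      LinearMap.range (d (vars A σ) M 0) := by
  induction p using MvPolynomial.induction_on generalizing y with
  | C a =>
    rw [aeval_C, ← MvPolynomial.algebraMap_eq, algebraMap_smul, Algebra.algebraMap_self_apply,
      sub_self]
    exact zero_mem _
  | add p q hp hq =>
    rw [map_add, add_smul, add_smul, TensorProduct.tmul_add, TensorProduct.tmul_add,
      add_sub_add_comm]
    exact add_mem (hp y) (hq y)
  | mul_X p α _ =>
    refine ⟨wedge 1 (fun _ ↦ Finsupp.single α 1) ⊗ₜ[A] (p • y), ?_⟩
    rw [d_wedge_tmul, Subsingleton.elim v (Fin.removeNth 0 fun _ ↦ Finsupp.single α 1)]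
    simp [smul_smul, mul_comm]

/-- The inverse of the map induced by the augmentation. -/
noncomputable def augInv : EvalZero A σ ⊗[MvPolynomial σ A] M →+
    (ExtPow A (σ →₀ A) 0 ⊗[A] M) ⧸ LinearMap.range (d (vars A σ) M 0) :=
  TensorProduct.liftAddHom
    (AddMonoidHom.mk' (fun a : EvalZero A σ ↦
      ((Submodule.mkQ (LinearMap.range (d (vars A σ) M 0))) ∘ₗ
        (TensorProduct.mk A _ M (wedge 0 Fin.elim0)) ∘ₗ
        LinearMap.lsmul A M (toEvalZero.symm a)).toAddMonoidHom)
      fun a b ↦ by ext y; simp [TensorProduct.tmul_add])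
    fun p a y ↦ by
      refine ((Submodule.Quotient.eq _).mpr ?_).symm
      have := wedge_zero_tmul_smul_sub_mem_range M p Fin.elim0 (toEvalZero.symm a • y)
      rw [smul_smul, smul_comm] at this
      exact this

theorem augInv_tmul (y : M) :
    augInv M (toEvalZero 1 ⊗ₜ[MvPolynomial σ A] y) =
      Submodule.Quotient.mk (wedge 0 Fin.elim0 ⊗ₜ[A] y) := by
  refine (TensorProduct.liftAddHom_tmul ..).trans ?_
  simp

variable [Module A (EvalZero A σ ⊗[MvPolynomial σ A] M)]
  [IsScalarTower A (MvPolynomial σ A) (EvalZero A σ ⊗[MvPolynomial σ A] M)]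

/-- The augmentation `⋀⁰ L ⊗ M → A ⊗_P M`. -/
noncomputable def aug : ExtPow A (σ →₀ A) 0 ⊗[A] M →ₗ[A] EvalZero A σ ⊗[MvPolynomial σ A] M :=
  TensorProduct.lift (extLift (AlternatingMap.constOfIsEmpty A (σ →₀ A) (Fin 0)
    ((TensorProduct.mk (MvPolynomial σ A) (EvalZero A σ) M (toEvalZero 1)).restrictScalars A)))

@[simp]
theorem aug_wedge_tmul (v : Fin 0 → (σ →₀ A)) (y : M) :
    aug M (wedge 0 v ⊗ₜ[A] y) = toEvalZero 1 ⊗ₜ[MvPolynomial σ A] y := by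
  simp [aug]

theorem aug_surjective : Function.Surjective (aug (A := A) (σ := σ) M) := by
  intro z
  induction z with
  | zero => exact ⟨0, map_zero _⟩
  | add z w hz hw =>
    obtain ⟨z, rfl⟩ := hz
    obtain ⟨w, rfl⟩ := hw
    exact ⟨z + w, map_add _ _ _⟩
  | tmul a y =>
    obtain ⟨a, rfl⟩ := toEvalZero.surjective a
    refine ⟨wedge 0 Fin.elim0 ⊗ₜ[A] ((C a : MvPolynomial σ A) • y), ?_⟩
    rw [aug_wedge_tmul, ← TensorProduct.smul_tmul, smul_toEvalZero, aeval_C, mul_one,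
      Algebra.algebraMap_self_apply]

theorem aug_comp_d : aug M ∘ₗ d (vars A σ) M 0 = 0 := by
  refine hom_ext fun v y ↦ ?_
  have h (x : σ →₀ A) : (aeval (0 : σ → A) (vars A σ x) : A) = 0 := by
    simp [vars, Finsupp.linearCombination_apply, Finsupp.sum]
  rw [LinearMap.comp_apply, d_wedge_tmul, map_sum]
  refine Finset.sum_eq_zero fun k _ ↦ ?_
  rw [map_zsmul, aug_wedge_tmul, ← TensorProduct.smul_tmul, smul_toEvalZero, h]
  simp

theorem augInv_aug (z : ExtPow A (σ →₀ A) 0 ⊗[A] M) :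
    augInv M (aug M z) = Submodule.Quotient.mk z := by
  induction z using tensor_induction with
  | zero => simp
  | add z w hz hw => rw [map_add, map_add, hz, hw, Submodule.Quotient.mk_add]
  | wedge_tmul v y => rw [aug_wedge_tmul, Subsingleton.elim v Fin.elim0, augInv_tmul]

theorem ker_aug : LinearMap.ker (aug M) = LinearMap.range (d (vars A σ) M 0) := by
  refine le_antisymm (fun z hz ↦ ?_) (LinearMap.range_le_ker_iff.mpr (aug_comp_d M))
  rw [← Submodule.Quotient.mk_eq_zero, ← augInv_aug, LinearMap.mem_ker.mp hz, map_zero]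

end Augmentation

section Functor

open CategoryTheory Limits MonoidalCategory

variable (A : Type u) [CommRing A] (σ : Type u)

variable {A σ} in
/-- The `A`-module structure on a `P`-module. -/
@[reducible]
noncomputable def restrictModule (M : ModuleCat.{u} (MvPolynomial σ A)) : Module A M :=
  Module.compHom M (algebraMap A (MvPolynomial σ A))

attribute [local instance] restrictModule

variable {A σ} in
theorem restrictModule_isScalarTower (M : ModuleCat.{u} (MvPolynomial σ A)) :
    IsScalarTower A (MvPolynomial σ A) M :=
  ⟨fun a p y ↦ by rw [Algebra.smul_def, mul_smul]; rfl⟩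

attribute [local instance] restrictModule_isScalarTower

/-- The Koszul complex `K(L, M)`. -/
noncomputable def complexObj (M : ModuleCat.{u} (MvPolynomial σ A)) :
    ChainComplex (ModuleCat.{u} A) ℕ :=
  ChainComplex.of (fun n ↦ ModuleCat.of A (ExtPow A (σ →₀ A) n ⊗[A] M))
    (fun n ↦ ModuleCat.ofHom (d (vars A σ) M n))
    fun n ↦ by rw [← ModuleCat.ofHom_comp, d_comp_d]; rfl

theorem complexObj_d (M : ModuleCat.{u} (MvPolynomial σ A)) (n : ℕ) :
    (complexObj A σ M).d (n + 1) n = ModuleCat.ofHom (d (vars A σ) M n) :=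
  ChainComplex.of_d (fun n ↦ ModuleCat.of A (ExtPow A (σ →₀ A) n ⊗[A] M))
    (fun n ↦ ModuleCat.ofHom (d (vars A σ) M n)) n

/-- The Koszul complex `K(L, M)` as a functor in `M`. -/
noncomputable def complex :
    ModuleCat.{u} (MvPolynomial σ A) ⥤ ChainComplex (ModuleCat.{u} A) ℕ where
  obj M := complexObj A σ M
  map {M N} f := ChainComplex.ofHom
    (fun n ↦ ModuleCat.ofHom ((f.hom.restrictScalars A).lTensor (ExtPow A (σ →₀ A) n)))
    fun n ↦ by
      rw [complexObj_d, complexObj_d]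
      exact ModuleCat.hom_ext (lTensor_d (vars A σ) f.hom n).symm
  map_id M := by
    ext n : 2
    exact LinearMap.lTensor_id (R := A) _ M
  map_comp f g := by
    ext n : 2
    exact LinearMap.lTensor_comp (R := A) _ (g.hom.restrictScalars A) (f.hom.restrictScalars A)

theorem complex_d (M : ModuleCat.{u} (MvPolynomial σ A)) (n : ℕ) :
    ((complex A σ).obj M).d (n + 1) n = ModuleCat.ofHom (d (vars A σ) M n) :=
  complexObj_d A σ M n

instance : (complex A σ).PreservesZeroMorphisms where
  map_zero M N := by
    ext n : 2
    exact LinearMap.lTensor_zero (R := A) (P := N) (N := M) (ExtPow A (σ →₀ A) n)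

instance (n : ℕ) : Module.Free A (ExtPow A (σ →₀ A) n) :=
  inferInstanceAs (Module.Free A (⋀[A]^n (σ →₀ A)))

theorem complex_shortExact (S : ShortComplex (ModuleCat.{u} (MvPolynomial σ A)))
    (hS : S.ShortExact) : (S.map (complex A σ)).ShortExact := by
  refine HomologicalComplex.shortExact_of_degreewise_shortExact _ fun n ↦ ?_
  refine ModuleCat.shortComplex_shortExact _ ?_ ?_ ?_
  · exact Module.Flat.lTensor_exact (R := A) (ExtPow A (σ →₀ A) n)
      (f := S.f.hom.restrictScalars A) (g := S.g.hom.restrictScalars A)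
      (ShortComplex.ShortExact.moduleCat_exact_iff_function_exact S |>.mp hS.exact)
  · exact Module.Flat.lTensor_preserves_injective_linearMap (R := A) (M := ExtPow A (σ →₀ A) n)
      (S.f.hom.restrictScalars A) hS.moduleCat_injective_f
  · exact LinearMap.lTensor_surjective (R := A) (ExtPow A (σ →₀ A) n)
      (g := S.g.hom.restrictScalars A) hS.moduleCat_surjective_g

theorem complex_exactAt (Q : ModuleCat.{u} (MvPolynomial σ A)) [Projective Q] (n : ℕ) :
    ((complex A σ).obj Q).ExactAt (n + 1) := by
  have : Module.Projective (MvPolynomial σ A) Q := inferInstance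
  rw [HomologicalComplex.exactAt_iff' _ (n + 2) (n + 1) n (by simp) (by simp),
    ShortComplex.ShortExact.moduleCat_exact_iff_function_exact]
  change Function.Exact (((complex A σ).obj Q).d (n + 2) (n + 1)) (((complex A σ).obj Q).d (n + 1) n)
  rw [complex_d, complex_d]
  exact exact_d_of_projective n

/-- The functor `A ⊗_P -` with values in `A`-modules. -/
noncomputable abbrev evalTensor : ModuleCat.{u} (MvPolynomial σ A) ⥤ ModuleCat.{u} A :=
  (tensoringLeft _).obj (ModuleCat.of (MvPolynomial σ A) (EvalZero A σ)) ⋙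
    ModuleCat.restrictScalars (algebraMap A (MvPolynomial σ A))

/-- The augmentation of the Koszul complex. -/
noncomputable def augHom (M : ModuleCat.{u} (MvPolynomial σ A)) :
    ((complex A σ).obj M).X 0 ⟶ (evalTensor A σ).obj M :=
  letI N : ModuleCat (MvPolynomial σ A) := ModuleCat.of _ (EvalZero A σ ⊗[MvPolynomial σ A] M)
  letI : Module A (EvalZero A σ ⊗[MvPolynomial σ A] M) := restrictModule N
  haveI : IsScalarTower A (MvPolynomial σ A) (EvalZero A σ ⊗[MvPolynomial σ A] M) :=
    restrictModule_isScalarTower N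
  ModuleCat.ofHom (aug (A := A) (σ := σ) M)

theorem augHom_wedge_tmul (M : ModuleCat.{u} (MvPolynomial σ A)) (v : Fin 0 → (σ →₀ A)) (y : M) :
    (augHom A σ M).hom (wedge 0 v ⊗ₜ[A] y) =
      (toEvalZero (1 : A) : EvalZero A σ) ⊗ₜ[MvPolynomial σ A] y :=
  letI N : ModuleCat (MvPolynomial σ A) := ModuleCat.of _ (EvalZero A σ ⊗[MvPolynomial σ A] M)
  letI : Module A (EvalZero A σ ⊗[MvPolynomial σ A] M) := restrictModule N
  haveI : IsScalarTower A (MvPolynomial σ A) (EvalZero A σ ⊗[MvPolynomial σ A] M) :=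
    restrictModule_isScalarTower N
  aug_wedge_tmul (A := A) (σ := σ) M v y

theorem augHom_surjective (M : ModuleCat.{u} (MvPolynomial σ A)) :
    Function.Surjective (augHom A σ M) :=
  letI N : ModuleCat (MvPolynomial σ A) := ModuleCat.of _ (EvalZero A σ ⊗[MvPolynomial σ A] M)
  letI : Module A (EvalZero A σ ⊗[MvPolynomial σ A] M) := restrictModule N
  haveI : IsScalarTower A (MvPolynomial σ A) (EvalZero A σ ⊗[MvPolynomial σ A] M) :=
    restrictModule_isScalarTower N
  aug_surjective (A := A) (σ := σ) M

theorem ker_augHom (M : ModuleCat.{u} (MvPolynomial σ A)) :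
    LinearMap.ker (augHom A σ M).hom = LinearMap.range (d (vars A σ) M 0) :=
  letI N : ModuleCat (MvPolynomial σ A) := ModuleCat.of _ (EvalZero A σ ⊗[MvPolynomial σ A] M)
  letI : Module A (EvalZero A σ ⊗[MvPolynomial σ A] M) := restrictModule N
  haveI : IsScalarTower A (MvPolynomial σ A) (EvalZero A σ ⊗[MvPolynomial σ A] M) :=
    restrictModule_isScalarTower N
  ker_aug (A := A) (σ := σ) M

theorem augHom_naturality {M N : ModuleCat.{u} (MvPolynomial σ A)} (f : M ⟶ N) :
    ((complex A σ).map f).f 0 ≫ augHom A σ N = augHom A σ M ≫ (evalTensor A σ).map f := by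
  ext1
  refine hom_ext fun v y ↦ ?_
  exact (augHom_wedge_tmul A σ N v (f y)).trans
    (congrArg ((evalTensor A σ).map f).hom (augHom_wedge_tmul A σ M v y)).symm

theorem d_comp_augHom (M : ModuleCat.{u} (MvPolynomial σ A)) :
    ((complex A σ).obj M).d 1 0 ≫ augHom A σ M = 0 := by
  rw [complex_d]
  exact ModuleCat.hom_ext (LinearMap.range_le_ker_iff.mp (ker_augHom A σ M).ge)

/-- The augmentation is a cokernel of the differential. -/
noncomputable def augHomIsCokernel (M : ModuleCat.{u} (MvPolynomial σ A)) :
    IsColimit (CokernelCofork.ofπ _ (d_comp_augHom A σ M)) :=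
  have : Epi (ShortComplex.mk _ _ (d_comp_augHom A σ M)).g :=
    (ModuleCat.epi_iff_surjective _).mpr (augHom_surjective A σ M)
  ShortComplex.Exact.gIsCokernel (S := ShortComplex.mk _ _ (d_comp_augHom A σ M)) (by
    rw [ShortComplex.moduleCat_exact_iff_range_eq_ker]
    exact (congrArg (fun f ↦ LinearMap.range f.hom) (complex_d A σ M 0)).trans
      (ker_augHom A σ M).symm)

/-- The opcycles of the Koszul complex in degree zero are `A ⊗_P M`. -/
noncomputable def opcyclesZeroIso (M : ModuleCat.{u} (MvPolynomial σ A)) :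
    ((complex A σ).obj M).opcycles 0 ≅ (evalTensor A σ).obj M :=
  (((complex A σ).obj M).opcyclesIsCokernel 1 0 (by simp)).coconePointUniqueUpToIso
    (augHomIsCokernel A σ M)

theorem pOpcycles_opcyclesZeroIso_hom (M : ModuleCat.{u} (MvPolynomial σ A)) :
    ((complex A σ).obj M).pOpcycles 0 ≫ (opcyclesZeroIso A σ M).hom = augHom A σ M :=
  (((complex A σ).obj M).opcyclesIsCokernel 1 0 (by simp)).comp_coconePointUniqueUpToIso_hom
    (augHomIsCokernel A σ M) WalkingParallelPair.one

/-- The zeroth Koszul homology is `A ⊗_P M`. -/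
noncomputable def homologyZeroIso :
    complex A σ ⋙ HomologicalComplex.homologyFunctor _ _ 0 ≅ evalTensor A σ :=
  NatIso.ofComponents
    (fun M ↦ ((complex A σ).obj M).isoHomologyι 0 _ rfl (by simp) ≪≫ opcyclesZeroIso A σ M)
    fun {M N} f ↦ by
      have h : HomologicalComplex.opcyclesMap ((complex A σ).map f) 0 ≫
          (opcyclesZeroIso A σ N).hom = (opcyclesZeroIso A σ M).hom ≫ (evalTensor A σ).map f := by
        rw [← cancel_epi (((complex A σ).obj M).pOpcycles 0),
          HomologicalComplex.p_opcyclesMap_assoc, pOpcycles_opcyclesZeroIso_hom,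
          ← Category.assoc, pOpcycles_opcyclesZeroIso_hom, augHom_naturality]
      change HomologicalComplex.homologyMap ((complex A σ).map f) 0 ≫
        HomologicalComplex.homologyι _ 0 ≫ (opcyclesZeroIso A σ N).hom =
        (HomologicalComplex.homologyι _ 0 ≫ (opcyclesZeroIso A σ M).hom) ≫ (evalTensor A σ).map f
      rw [HomologicalComplex.homologyι_naturality_assoc, h, Category.assoc]

end Functor

section Tor

open CategoryTheory Limits MonoidalCategory

theorem nonempty_homology_linearEquiv {A : Type u} [CommRing A]
    (S : ShortComplex (ModuleCat.{u} A)) :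
    Nonempty (S.homology ≃ₗ[A] LinearMap.ker S.g.hom ⧸
      Submodule.comap (LinearMap.ker S.g.hom).subtype (LinearMap.range S.f.hom)) :=
  ⟨S.moduleCatHomologyIso.toLinearEquiv ≪≫ₗ Submodule.quotEquivOfEq _ _ (by
    ext x
    simp only [LinearMap.mem_range, Submodule.mem_comap, Submodule.subtype_apply, Subtype.ext_iff]
    rfl)⟩

variable (A : Type u) [CommRing A] (σ : Type u)

attribute [local instance] restrictModule restrictModule_isScalarTower

instance (N : ModuleCat.{u} (MvPolynomial σ A)) :
    PreservesFiniteColimits ((tensoringLeft (ModuleCat.{u} (MvPolynomial σ A))).obj N) :=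
  inferInstanceAs (PreservesFiniteColimits (tensorLeft N))

theorem nonempty_homology_iso_tor (M : ModuleCat.{u} (MvPolynomial σ A)) (n : ℕ) :
    Nonempty (((complex A σ).obj M).homology (n + 1) ≅
      (ModuleCat.restrictScalars (algebraMap A (MvPolynomial σ A))).obj
        (((Tor (ModuleCat.{u} (MvPolynomial σ A)) (n + 1)).obj
          (ModuleCat.of (MvPolynomial σ A) (EvalZero A σ))).obj M)) := by
  obtain ⟨i⟩ := nonempty_homology_iso_of_resolution (evalTensor A σ) (complex A σ)
    (complex_shortExact A σ) (fun Q _ n ↦ complex_exactAt A σ Q n) (homologyZeroIso A σ)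
    (projectiveResolution M) n
  let G := (tensoringLeft (ModuleCat.{u} (MvPolynomial σ A))).obj
    (ModuleCat.of (MvPolynomial σ A) (EvalZero A σ))
  let K := (G.mapHomologicalComplex _).obj (projectiveResolution M).complex
  exact ⟨i ≪≫ (K.sc (n + 1)).mapHomologyIso (ModuleCat.restrictScalars (algebraMap A _)) ≪≫
    (ModuleCat.restrictScalars (algebraMap A _)).mapIso
      ((projectiveResolution M).isoLeftDerivedObj G (n + 1)).symm⟩

theorem nonempty_torPoly_zero (M : ModuleCat.{u} (MvPolynomial σ A)) :
    Nonempty (TorPoly A σ M 0 ≃ₗ[A]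
      ((ExtPow A (σ →₀ A) 0 ⊗[A] M) ⧸ LinearMap.range (d (vars A σ) M 0))) :=
  let G := (tensoringLeft (ModuleCat.{u} (MvPolynomial σ A))).obj
    (ModuleCat.of (MvPolynomial σ A) (EvalZero A σ))
  ⟨((ModuleCat.restrictScalars (algebraMap A (MvPolynomial σ A))).mapIso
    (G.leftDerivedZeroIsoSelf.app M)).toLinearEquiv ≪≫ₗ
    ((augHom A σ M).hom.quotKerEquivOfSurjective (augHom_surjective A σ M)).symm ≪≫ₗ
    Submodule.quotEquivOfEq _ _ (ker_augHom A σ M)⟩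

theorem nonempty_torPoly_succ (M : ModuleCat.{u} (MvPolynomial σ A)) (n : ℕ) :
    Nonempty (TorPoly A σ M (n + 1) ≃ₗ[A] LinearMap.ker (d (vars A σ) M n) ⧸
      Submodule.comap (LinearMap.ker (d (vars A σ) M n)).subtype
        (LinearMap.range (d (vars A σ) M (n + 1)))) := by
  let K := (complex A σ).obj M
  obtain ⟨i⟩ := nonempty_homology_iso_tor A σ M n
  obtain ⟨j⟩ := nonempty_homology_linearEquiv (K.sc' (n + 2) (n + 1) n)
  have h (k : ℕ) : (K.d (k + 1) k).hom = d (vars A σ) M k := by rw [complex_d]; rfl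
  change (K.sc' (n + 2) (n + 1) n).homology ≃ₗ[A] LinearMap.ker (K.d (n + 1) n).hom ⧸
    Submodule.comap (LinearMap.ker (K.d (n + 1) n).hom).subtype
      (LinearMap.range (K.d (n + 2) (n + 1)).hom) at j
  rw [h, h] at j
  exact ⟨(i.symm ≪≫ K.homologyIsoSc' (n + 2) (n + 1) n (by simp) (by simp)).toLinearEquiv ≪≫ₗ j⟩

end Tor

end Koszul

/-- Let `A` be a commutative ring, `σ` a type, `P = A[Xα : α ∈ σ]` the
polynomial ring, `L` the free `A`-module on `σ` and `ι : L → P` the `A`-linear map sending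
the basis vector `eα` to `Xα`.  For a `P`-module `M`, let `K(L, M)` be the complex with
terms `K(L,M)ᵢ = ⋀ᴬⁱ L ⊗_A M` and differential determined on generators by
`∂((x₁∧…∧xᵢ) ⊗ y) = Σₖ (−1)^{k+1} (x₁∧…∧x̂ₖ∧…∧xᵢ) ⊗ ι(xₖ)·y`.
Then for every `i ≥ 0` there is an isomorphism of `A`-modules
`Tor_i^P(A, M) ≅ H_i(K(L, M))`, where `A` is a `P`-module via evaluation at `0`. -/
theorem tor_iso_koszul_homology
    (A : Type u) [CommRing A] (σ : Type u) (M : Type u)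
    [AddCommGroup M] [Module (MvPolynomial σ A) M]
    [Module A M] [IsScalarTower A (MvPolynomial σ A) M]
    (dK : ∀ i : ℕ,
      (ExtPow A (σ →₀ A) (i+1) ⊗[A] M) →ₗ[A] (ExtPow A (σ →₀ A) i ⊗[A] M))
    (hdK : ∀ (i : ℕ) (x : Fin (i+1) → (σ →₀ A)) (y : M),
      dK i (wedgeGen A (σ →₀ A) (i+1) x ⊗ₜ[A] y) =
        ∑ k : Fin (i+1), (-1 : ℤ) ^ (k : ℕ) •
          (wedgeGen A (σ →₀ A) i (x ∘ k.succAbove) ⊗ₜ[A]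
            (Finsupp.linearCombination A (fun α => (MvPolynomial.X α : MvPolynomial σ A)) (x k) • y))) :
    Nonempty (TorPoly A σ M 0 ≃ₗ[A]
        ((ExtPow A (σ →₀ A) 0 ⊗[A] M) ⧸ LinearMap.range (dK 0))) ∧
      ∀ i : ℕ, Nonempty (TorPoly A σ M (i+1) ≃ₗ[A]
        (↥(LinearMap.ker (dK i)) ⧸
          Submodule.comap (LinearMap.ker (dK i)).subtype (LinearMap.range (dK (i+1))))) := by
  obtain rfl : dK = fun i ↦ Koszul.d (Koszul.vars A σ) M i := by
    ext1 i
    refine Koszul.hom_ext fun v y ↦ ?_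
    rw [Koszul.d_wedge_tmul]
    exact hdK i v y
  obtain rfl : ‹Module A M› =
      Koszul.restrictModule (ModuleCat.of (MvPolynomial σ A) M) :=
    Module.ext' _ _ fun a y ↦ (algebraMap_smul (MvPolynomial σ A) a y).symm
  exact ⟨Koszul.nonempty_torPoly_zero A σ (ModuleCat.of _ M),
    Koszul.nonempty_torPoly_succ A σ (ModuleCat.of _ M)⟩
end

section
/- Let A be a commutative ring, Φ a type, P = A[X_α : α ∈ Φ] the polynomial ring, a : Φ → A a function, and 𝔥 the ideal of P generated by the elements X_α − a_α. Then for every s ≥ 0, the ideal power 𝔥^s, regarded as an A-module via the structural inclusion A → P, is a projective A-module. -/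
namespace MvPolynomial

variable {A Φ : Type*} [CommRing A]

/-- The `A`-algebra automorphism of `A[X_α : α ∈ Φ]` sending `X α` to `X α - a α`. -/
noncomputable def translateEquiv (a : Φ → A) : MvPolynomial Φ A ≃ₐ[A] MvPolynomial Φ A :=
  AlgEquiv.ofAlgHom (aeval fun α => X α - C (a α)) (aeval fun α => X α + C (a α))
    (by ext α; simp [← algebraMap_eq]) (by ext α; simp [← algebraMap_eq])

@[simp]
lemma translateEquiv_X (a : Φ → A) (α : Φ) : translateEquiv a (X α) = X α - C (a α) := by
  simp [translateEquiv]

lemma map_translateEquiv_idealOfVars (a : Φ → A) :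
    (idealOfVars Φ A).map (translateEquiv a) =
      Ideal.span (Set.range fun α => X α - C (a α)) := by
  rw [idealOfVars, Ideal.map_span, ← Set.range_comp]
  congr 2
  ext1 α
  exact translateEquiv_X a α

lemma free_pow_idealOfVars (s : ℕ) : Module.Free A ↥(idealOfVars Φ A ^ s) := by
  rw [pow_idealOfVars]
  exact Module.Free.of_basis (basisRestrictSupport A _)

end MvPolynomial

/-- An algebra isomorphism restricts to a linear isomorphism from an ideal to its image. -/
noncomputable def AlgEquiv.idealMapEquiv {R S T : Type*} [CommRing R] [CommRing S] [CommRing T]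
    [Algebra R S] [Algebra R T] (e : S ≃ₐ[R] T) (I : Ideal S) : I ≃ₗ[R] I.map e :=
  e.toLinearEquiv.ofSubmodules (I.restrictScalars R) ((I.map e).restrictScalars R) (by
    ext x
    exact (Ideal.mem_map_of_equiv e x).symm)

/-- Let `A` be a commutative ring, `Φ` a type, `P = A[Xα : α ∈ Φ]` the
polynomial ring, `a : Φ → A` a function, and `𝔥` the ideal of `P` generated by the elements
`Xα − aα`.  Then for every `s ≥ 0`, the ideal power `𝔥^s`, regarded as an `A`-module via the
structural inclusion `A → P`, is a projective `A`-module. -/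
theorem ideal_pow_projective
    (A : Type*) [CommRing A] (Φ : Type*) (a : Φ → A)
    (𝔥 : Ideal (MvPolynomial Φ A))
    (h𝔥 : 𝔥 = Ideal.span (Set.range fun α => MvPolynomial.X α - MvPolynomial.C (a α)))
    (s : ℕ) :
    Module.Projective A ↥(𝔥 ^ s) := by
  subst h𝔥
  rw [← MvPolynomial.map_translateEquiv_idealOfVars, ← Ideal.map_pow]
  have := MvPolynomial.free_pow_idealOfVars (A := A) (Φ := Φ) s
  exact Module.Projective.of_equiv
    ((MvPolynomial.translateEquiv a).idealMapEquiv (MvPolynomial.idealOfVars Φ A ^ s))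
end

section
/- Let A be a commutative ring, n ≥ 0 an integer, and C a chain complex of A-modules with C_i = 0 for i < 0 such that C_i is a flat A-module for every i ≥ 0 and H_j(C) = 0 for every j ≤ n. Then for every A-module M and every integer k ≤ n, H_k(C ⊗_A M) = 0, where C ⊗_A M is the chain complex with (C ⊗_A M)_i = C_i ⊗_A M and differentials ∂_i ⊗ id_M. -/
open LinearMap in
/-- The kernel of a linear map from a flat module with flat range is flat. -/
theorem Module.Flat.ker_of_flat_range {R N P : Type*} [CommRing R] [AddCommGroup N] [Module R N]
    [AddCommGroup P] [Module R P] (f : N →ₗ[R] P) [Module.Flat R N] [Module.Flat R (range f)] :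
    Module.Flat R (ker f) := by
  rw [Module.Flat.iff_lTensor_preserves_injective_linearMap]
  intro X Y _ _ _ _ u hu
  have hX : Function.Injective ((ker f).subtype.lTensor X) :=
    lTensor_injective_of_exact_of_flat f.rangeRestrict f.surjective_rangeRestrict _
      (ker f).subtype_injective
      (by rw [LinearMap.exact_iff, ker_rangeRestrict, Submodule.range_subtype]) X
  have hN : Function.Injective (u.rTensor N) :=
    Module.Flat.rTensor_preserves_injective_linearMap u hu
  have hcomp : (ker f).subtype.lTensor Y ∘ₗ u.rTensor (ker f) =
      u.rTensor N ∘ₗ (ker f).subtype.lTensor X := by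
    rw [lTensor_comp_rTensor, rTensor_comp_lTensor]
  have hr : Function.Injective (u.rTensor (ker f)) := by
    refine Function.Injective.of_comp (f := (ker f).subtype.lTensor Y) ?_
    rw [← coe_comp, hcomp, coe_comp]
    exact hN.comp hX
  rwa [lTensor_inj_iff_rTensor_inj]

open LinearMap in
/-- If `L → N → P → Q` is exact and the range of `P → Q` is flat, then `L → N → P` stays exact
after tensoring with any module. -/
theorem LinearMap.ker_rTensor_eq_range_of_flat_range {R L N P Q : Type*} [CommRing R]
    [AddCommGroup L] [Module R L] [AddCommGroup N] [Module R N] [AddCommGroup P] [Module R P]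
    [AddCommGroup Q] [Module R Q] {f : L →ₗ[R] N} {g : N →ₗ[R] P} {h : P →ₗ[R] Q}
    (hfg : ker g = range f) (hgh : ker h = range g) [Module.Flat R (range h)]
    (M : Type*) [AddCommGroup M] [Module R M] :
    ker (g.rTensor M) = range (f.rTensor M) := by
  have hinj : Function.Injective ((range g).subtype.rTensor M) := by
    rw [← lTensor_inj_iff_rTensor_inj]
    exact lTensor_injective_of_exact_of_flat h.rangeRestrict h.surjective_rangeRestrict _
      (range g).subtype_injective
      (by rw [LinearMap.exact_iff, ker_rangeRestrict, Submodule.range_subtype, hgh]) M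
  have hex : Function.Exact (f.rTensor M) (g.rangeRestrict.rTensor M) :=
    rTensor_exact M (by rw [LinearMap.exact_iff, ker_rangeRestrict, hfg])
      g.surjective_rangeRestrict
  have hg : g.rTensor M = (range g).subtype.rTensor M ∘ₗ g.rangeRestrict.rTensor M := by
    rw [← rTensor_comp]
    rfl
  rw [hg, ker_comp_of_ker_eq_bot _ (ker_eq_bot.mpr hinj), LinearMap.exact_iff.mp hex]

/-- Let `A` be a commutative ring, `n ≥ 0`, and `C` a chain complex of
`A`-modules concentrated in nonnegative degrees (`C_i = 0` for `i < 0`), with flat terms and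
`H_j(C) = 0` for every `j ≤ n`.  Then for every `A`-module `M` and every `k ≤ n`,
`H_k(C ⊗_A M) = 0`, where `C ⊗_A M` has terms `C_i ⊗_A M` and differentials `∂ᵢ ⊗ id`.

The complex is encoded as a family of modules `C i` (`i : ℤ`) together with maps
`d i j : C i →ₗ[A] C j` which vanish unless `j = i - 1` and compose to zero (the convention of
homological complexes); `H_j = 0` is expressed as `ker ∂_j = range ∂_{j+1}`. -/
theorem homology_tensor_vanish_of_flat_of_acyclic
    (A : Type*) [CommRing A] (n : ℤ) (hn : 0 ≤ n)
    (C : ℤ → Type*) [∀ i, AddCommGroup (C i)] [∀ i, Module A (C i)]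
    (d : ∀ i j : ℤ, C i →ₗ[A] C j)
    (hshape : ∀ i j : ℤ, j ≠ i - 1 → d i j = 0)
    (hdd : ∀ i j k : ℤ, ∀ x : C i, d j k (d i j x) = 0)
    (hconn : ∀ i : ℤ, i < 0 → Subsingleton (C i))
    (hflat : ∀ i : ℤ, 0 ≤ i → Module.Flat A (C i))
    (hacyclic : ∀ j : ℤ, j ≤ n →
      LinearMap.ker (d j (j - 1)) = LinearMap.range (d (j + 1) j))
    (M : Type*) [AddCommGroup M] [Module A M] (k : ℤ) (hk : k ≤ n) :
    LinearMap.ker (LinearMap.rTensor M (d k (k - 1)))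
      = LinearMap.range (LinearMap.rTensor M (d (k + 1) k)) := by
  have hexact : ∀ i j l : ℤ, j = i + 1 → l = j + 1 → j ≤ n →
      LinearMap.ker (d j i) = LinearMap.range (d l j) := by
    rintro i j _ hj rfl hjn
    obtain rfl : i = j - 1 := by omega
    exact hacyclic j hjn
  have hrange : ∀ (m : ℕ) (i j : ℤ), i < m → j = i + 1 → i ≤ n →
      Module.Flat A (LinearMap.range (d j i)) := by
    intro m
    induction m with
    | zero =>
      intro i j hi _ _
      have := hconn i (by simpa using hi)
      infer_instance
    | succ m ih =>
      intro i j hi hj hin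
      by_cases hi0 : i < 0
      · have := hconn i hi0
        infer_instance
      · rw [← hexact (i - 1) i j (by omega) hj hin]
        have := hflat i (by omega)
        have := ih (i - 1) i (by omega) (by omega) (by omega)
        exact Module.Flat.ker_of_flat_range _
  have := hrange (k - 1).toNat (k - 1 - 1) (k - 1) (by omega) (by omega) (by omega)
  exact LinearMap.ker_rTensor_eq_range_of_flat_range (hacyclic k hk)
    (hexact (k - 1 - 1) (k - 1) k (by omega) (by omega) (by omega)) M
end

section
/- Let A be a commutative ring, n ≥ 0 an integer, and C a chain complex of A-modules with C_i = 0 for i < 0 such that C_i is a projective A-module for every i ≥ 0 and H_j(C) = 0 for every j ≤ n. Then for every A-module M, the complex Hom_A(C, M) is exact in all degrees −k with k ≤ n; that is, Ker(Hom_A(∂_{k+1}, M)) = Im(Hom_A(∂_k, M)) as submodules of Hom_A(C_k, M) for every 0 ≤ k ≤ n. -/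
/-- In an exact sequence `L → P → Q` with `P` projective, a generalized inverse of `P → Q`
yields a generalized inverse of `L → P`. -/
theorem LinearMap.exists_comp_comp_eq_of_exact_of_projective
    {A L P Q : Type*} [CommRing A] [AddCommGroup L] [Module A L] [AddCommGroup P] [Module A P]
    [AddCommGroup Q] [Module A Q] [Module.Projective A P] {f : L →ₗ[A] P} {g : P →ₗ[A] Q}
    (hfg : LinearMap.ker g = LinearMap.range f) {s : Q →ₗ[A] P} (hs : g ∘ₗ s ∘ₗ g = g) :
    ∃ r : P →ₗ[A] L, f ∘ₗ r ∘ₗ f = f := by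
  have hmem : ∀ x, ((LinearMap.id : P →ₗ[A] P) - s ∘ₗ g) x ∈ LinearMap.range f := fun x => by
    rw [← hfg, LinearMap.mem_ker]
    simpa [sub_eq_zero] using (LinearMap.congr_fun hs x).symm
  obtain ⟨r, hr⟩ := Module.projective_lifting_property f.rangeRestrict
    ((LinearMap.id - s ∘ₗ g).codRestrict _ hmem) f.surjective_rangeRestrict
  refine ⟨r, LinearMap.ext fun y => ?_⟩
  have hgf : g (f y) = 0 := by
    rw [← LinearMap.mem_ker, hfg]
    exact LinearMap.mem_range_self f y
  simpa [hgf] using congrArg Subtype.val (LinearMap.congr_fun hr (f y))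

/-- Applying `Hom_A(-, M)` to an exact sequence `L → P → Q` preserves exactness if `P → Q` has a
generalized inverse. -/
theorem LinearMap.ker_lcomp_eq_range_lcomp_of_exact
    {A L P Q : Type*} [CommRing A] [AddCommGroup L] [Module A L] [AddCommGroup P] [Module A P]
    [AddCommGroup Q] [Module A Q] {f : L →ₗ[A] P} {g : P →ₗ[A] Q}
    (hfg : LinearMap.ker g = LinearMap.range f) {s : Q →ₗ[A] P} (hs : g ∘ₗ s ∘ₗ g = g)
    (M : Type*) [AddCommGroup M] [Module A M] :
    LinearMap.ker (LinearMap.lcomp A M f) = LinearMap.range (LinearMap.lcomp A M g) := by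
  ext φ
  rw [LinearMap.mem_ker, LinearMap.mem_range]
  constructor
  · intro hφ
    refine ⟨φ ∘ₗ s, LinearMap.ext fun x => ?_⟩
    have hx : x - s (g x) ∈ LinearMap.range f := by
      rw [← hfg, LinearMap.mem_ker]
      simpa [sub_eq_zero] using (LinearMap.congr_fun hs x).symm
    obtain ⟨y, hy⟩ := hx
    have hφy : φ (f y) = 0 := LinearMap.congr_fun hφ y
    rw [hy, map_sub, sub_eq_zero] at hφy
    exact hφy.symm
  · rintro ⟨ψ, rfl⟩
    refine LinearMap.ext fun y => ?_
    have hgf : g (f y) = 0 := by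
      rw [← LinearMap.mem_ker, hfg]
      exact LinearMap.mem_range_self f y
    simp [hgf]

/-- Let `A` be a commutative ring, `n ≥ 0`, and `C` a chain complex of
`A`-modules concentrated in nonnegative degrees, with projective terms and `H_j(C) = 0` for
every `j ≤ n`.  Then for every `A`-module `M`, the complex `Hom_A(C, M)` is exact in degrees
`−k` for `0 ≤ k ≤ n`: `Ker(Hom_A(∂_{k+1}, M)) = Im(Hom_A(∂_k, M))` inside `Hom_A(C_k, M)`.

The complex is encoded as a family of modules `C i` (`i : ℤ`) together with maps
`d i j : C i →ₗ[A] C j` which vanish unless `j = i - 1` and compose to zero; `Hom_A(∂, M)` is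
precomposition `LinearMap.lcomp`. -/
theorem hom_complex_exact_of_projective_of_acyclic
    (A : Type*) [CommRing A] (n : ℤ) (hn : 0 ≤ n)
    (C : ℤ → Type*) [∀ i, AddCommGroup (C i)] [∀ i, Module A (C i)]
    (d : ∀ i j : ℤ, C i →ₗ[A] C j)
    (hshape : ∀ i j : ℤ, j ≠ i - 1 → d i j = 0)
    (hdd : ∀ i j k : ℤ, ∀ x : C i, d j k (d i j x) = 0)
    (hconn : ∀ i : ℤ, i < 0 → Subsingleton (C i))
    (hproj : ∀ i : ℤ, 0 ≤ i → Module.Projective A (C i))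
    (hacyclic : ∀ j : ℤ, j ≤ n →
      LinearMap.ker (d j (j - 1)) = LinearMap.range (d (j + 1) j))
    (M : Type*) [AddCommGroup M] [Module A M] (k : ℤ) (hk0 : 0 ≤ k) (hk : k ≤ n) :
    LinearMap.ker (LinearMap.lcomp A M (d (k + 1) k))
      = LinearMap.range (LinearMap.lcomp A M (d k (k - 1))) := by
  have hinv : ∀ j : ℤ, -1 ≤ j → j ≤ n →
      ∃ s : C j →ₗ[A] C (j + 1), d (j + 1) j ∘ₗ s ∘ₗ d (j + 1) j = d (j + 1) j := by
    intro j hj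
    induction j, hj using Int.leInduction with
    | base =>
      intro _
      have := hconn (-1) (by lia)
      exact ⟨0, LinearMap.ext fun _ => Subsingleton.elim _ _⟩
    | succ j hj ih =>
      intro hjn
      obtain ⟨s, hs⟩ := ih (by lia)
      have := hproj (j + 1) (by lia)
      have hexact := hacyclic (j + 1) hjn
      rw [add_sub_cancel_right] at hexact
      exact LinearMap.exists_comp_comp_eq_of_exact_of_projective hexact hs
  have hinvk := hinv (k - 1) (by lia) (by lia)
  rw [sub_add_cancel] at hinvk
  obtain ⟨s, hs⟩ := hinvk
  exact LinearMap.ker_lcomp_eq_range_lcomp_of_exact (hacyclic k hk) hs M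
end

section
/- Let A be a commutative ring and 0 → U →^f V →^g W → 0 a split short exact sequence of A-modules in which U, V, and W are free. Then the sequence 0 → ⋀²_A U → U ⊗_A V → Sym²_A V → Sym²_A W → 0 is exact, where the first map sends u ∧ u' to u ⊗ f(u') − u' ⊗ f(u), the second map sends u ⊗ v to the class of f(u) ⊗ v in Sym²_A V, and the third map is induced by g ⊗ g. -/
open scoped TensorProduct

/-- The second symmetric power of an `A`-module `V`: the quotient of `V ⊗_A V` by the
submodule generated by the elements `x ⊗ y − y ⊗ x`. -/
abbrev SymSq (A : Type*) [CommRing A] (V : Type*) [AddCommGroup V] [Module A V] :=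
  (V ⊗[A] V) ⧸
    Submodule.span A {z : V ⊗[A] V | ∃ x y : V, z = x ⊗ₜ[A] y - y ⊗ₜ[A] x}

/-- The map `Sym² V → Sym² W` induced by `g ⊗ g` for a linear map `g : V → W`. -/
noncomputable def symSqMap (A : Type*) [CommRing A] (V W : Type*)
    [AddCommGroup V] [Module A V] [AddCommGroup W] [Module A W] (g : V →ₗ[A] W) :
    SymSq A V →ₗ[A] SymSq A W :=
  Submodule.mapQ _ _ (TensorProduct.map g g)
    (Submodule.span_le.mpr (by
      rintro z ⟨x, y, rfl⟩
      simp only [SetLike.mem_coe, Submodule.mem_comap, map_sub, TensorProduct.map_tmul]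
      exact Submodule.subset_span ⟨g x, g y, rfl⟩))

/-- A linear endomorphism of `⋀² M` fixing `bᵢ ∧ bⱼ` for all distinct elements of a basis
is the identity. -/
theorem ExtPow.linearMap_eq_id_of_basis {A : Type*} [CommRing A] {M ι : Type*}
    [AddCommGroup M] [Module A M] (b : Module.Basis ι A M)
    (φ : ExtPow A M 2 →ₗ[A] ExtPow A M 2)
    (h : ∀ i j, i ≠ j → φ (wedgeGen A M 2 ![b i, b j]) = wedgeGen A M 2 ![b i, b j]) :
    φ = LinearMap.id := by
  refine exteriorPower.linearMap_ext (R := A) (n := 2) (M := M) (N := ExtPow A M 2)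
    (Module.Basis.ext_alternating b fun v hv => ?_)
  have hvec : (fun k => b (v k)) = ![b (v 0), b (v 1)] := by
    ext k; fin_cases k <;> rfl
  rw [hvec]
  exact h (v 0) (v 1) (hv.ne (by decide))

theorem wedgeGen_two_swap (A : Type*) [CommRing A] {M : Type*} [AddCommGroup M] [Module A M]
    (x y : M) : wedgeGen A M 2 ![y, x] = -wedgeGen A M 2 ![x, y] := by
  apply Subtype.ext
  have h := (ExteriorAlgebra.ιMulti A 2 (M := M)).map_swap ![x, y]
    (show (0 : Fin 2) ≠ 1 by decide)
  have hvec : ![x, y] ∘ Equiv.swap (0 : Fin 2) 1 = ![y, x] := by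
    ext k; fin_cases k <;> simp
  rw [hvec] at h
  exact h

/-- For `M` free, the antisymmetrization `⋀² M → M ⊗ M` has a left inverse. -/
theorem exists_leftInverse_antisymmetrization (A : Type*) [CommRing A] (M : Type*)
    [AddCommGroup M] [Module A M] [Module.Free A M] :
    ∃ β : M ⊗[A] M →ₗ[A] ExtPow A M 2, ∀ δ : ExtPow A M 2 →ₗ[A] M ⊗[A] M,
      (∀ x y, δ (wedgeGen A M 2 ![x, y]) = x ⊗ₜ[A] y - y ⊗ₜ[A] x) →
        β ∘ₗ δ = LinearMap.id := by
  classical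
  let b := Module.Free.chooseBasis A M
  let _ : LinearOrder (Module.Free.ChooseBasisIndex A M) :=
    linearOrderOfSTO WellOrderingRel
  let β : M ⊗[A] M →ₗ[A] ExtPow A M 2 := TensorProduct.lift
    (b.constr A fun i => b.constr A fun j =>
      if i < j then wedgeGen A M 2 ![b i, b j] else 0)
  have hβ (i j) : β (b i ⊗ₜ b j) = if i < j then wedgeGen A M 2 ![b i, b j] else 0 := by
    simp only [β, TensorProduct.lift.tmul, Module.Basis.constr_basis]
  refine ⟨β, fun δ hδ => ExtPow.linearMap_eq_id_of_basis b _ fun i j hij => ?_⟩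
  rw [LinearMap.comp_apply, hδ, map_sub, hβ, hβ]
  rcases lt_or_gt_of_ne hij with h | h
  · rw [if_pos h, if_neg h.not_gt, sub_zero]
  · rw [if_neg h.not_gt, if_pos h, zero_sub, wedgeGen_two_swap A (b j) (b i)]

/-- A section of the surjection in a short exact sequence yields the complementary projection
onto the kernel. -/
theorem exists_complementary_projection {A : Type*} [CommRing A] {U V W : Type*}
    [AddCommGroup U] [Module A U] [AddCommGroup V] [Module A V]
    [AddCommGroup W] [Module A W] {f : U →ₗ[A] V} {g : V →ₗ[A] W}
    (hinj : Function.Injective f) (hexact : LinearMap.ker g = LinearMap.range f)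
    {s : W →ₗ[A] V} (hs : g ∘ₗ s = LinearMap.id) :
    ∃ r : V →ₗ[A] U, (∀ v, f (r v) = v - s (g v)) ∧ ∀ u, r (f u) = u := by
  have hmem (v : V) : (LinearMap.id - s ∘ₗ g : V →ₗ[A] V) v ∈ LinearMap.range f := by
    have hgs := LinearMap.congr_fun hs (g v)
    simp only [LinearMap.comp_apply, LinearMap.id_apply] at hgs
    rw [← hexact, LinearMap.mem_ker]
    simp [hgs]
  let r : V →ₗ[A] U := (LinearEquiv.ofInjective f hinj).symm.toLinearMap ∘ₗ
    (LinearMap.id - s ∘ₗ g).codRestrict (LinearMap.range f) hmem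
  have hr (v : V) : f (r v) = v - s (g v) :=
    congrArg Subtype.val ((LinearEquiv.ofInjective f hinj).apply_symm_apply ⟨_, hmem v⟩)
  refine ⟨r, hr, fun u => hinj ?_⟩
  have hgf : g (f u) = 0 := by
    rw [← LinearMap.mem_ker, hexact]
    exact LinearMap.mem_range_self f u
  rw [hr, hgf, map_zero, sub_zero]

/-- The map `V ⊗ V → U ⊗ V`, `v ⊗ v' ↦ r v ⊗ v' + r v' ⊗ p v`. -/
noncomputable def symSqProj {A : Type*} [CommRing A] {U V : Type*}
    [AddCommGroup U] [Module A U] [AddCommGroup V] [Module A V]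
    (r : V →ₗ[A] U) (p : V →ₗ[A] V) : V ⊗[A] V →ₗ[A] U ⊗[A] V :=
  TensorProduct.map r LinearMap.id +
    TensorProduct.map r p ∘ₗ (TensorProduct.comm A V V).toLinearMap

@[simp]
theorem symSqProj_tmul {A : Type*} [CommRing A] {U V : Type*}
    [AddCommGroup U] [Module A U] [AddCommGroup V] [Module A V]
    (r : V →ₗ[A] U) (p : V →ₗ[A] V) (v v' : V) :
    symSqProj r p (v ⊗ₜ v') = r v ⊗ₜ v' + r v' ⊗ₜ p v := by
  simp [symSqProj]

theorem SymSq.mk_tmul_comm {A : Type*} [CommRing A] {V : Type*} [AddCommGroup V] [Module A V]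
    (x y : V) :
    (Submodule.Quotient.mk (x ⊗ₜ[A] y) : SymSq A V) = Submodule.Quotient.mk (y ⊗ₜ[A] x) :=
  (Submodule.Quotient.eq _).mpr (Submodule.subset_span ⟨x, y, rfl⟩)

/-- Let `A` be a commutative ring and `0 → U →f V →g W → 0` a split short
exact sequence of `A`-modules with `U`, `V`, `W` free.  Then the sequence
`0 → ⋀²_A U → U ⊗_A V → Sym²_A V → Sym²_A W → 0` is exact, where the first map sends
`u ∧ u'` to `u ⊗ f(u') − u' ⊗ f(u)`, the second sends `u ⊗ v` to the class of `f(u) ⊗ v`,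
and the third is induced by `g ⊗ g`. -/
theorem exterior_tensor_sym_four_term_exact
    (A : Type*) [CommRing A] (U V W : Type*)
    [AddCommGroup U] [Module A U] [AddCommGroup V] [Module A V]
    [AddCommGroup W] [Module A W]
    [Module.Free A U] [Module.Free A V] [Module.Free A W]
    (f : U →ₗ[A] V) (g : V →ₗ[A] W)
    (hinj : Function.Injective f) (hexact : LinearMap.ker g = LinearMap.range f)
    (hsurj : Function.Surjective g)
    (hsplit : ∃ s : W →ₗ[A] V, g.comp s = LinearMap.id)
    (α : ExtPow A U 2 →ₗ[A] (U ⊗[A] V))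
    (hα : ∀ u u' : U,
      α (wedgeGen A U 2 ![u, u']) = u ⊗ₜ[A] f u' - u' ⊗ₜ[A] f u) :
    Function.Injective α ∧
      LinearMap.ker ((Submodule.mkQ
          (Submodule.span A {z : V ⊗[A] V | ∃ x y : V, z = x ⊗ₜ[A] y - y ⊗ₜ[A] x})).comp
            (LinearMap.rTensor V f)) = LinearMap.range α ∧
      LinearMap.ker (symSqMap A V W g) =
        LinearMap.range ((Submodule.mkQ
          (Submodule.span A {z : V ⊗[A] V | ∃ x y : V, z = x ⊗ₜ[A] y - y ⊗ₜ[A] x})).comp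
            (LinearMap.rTensor V f)) ∧
      Function.Surjective (symSqMap A V W g) := by
  obtain ⟨s, hs⟩ := hsplit
  obtain ⟨r, hfr, hrf⟩ := exists_complementary_projection hinj hexact hs
  have hgf (u : U) : g (f u) = 0 := by
    rw [← LinearMap.mem_ker, hexact]
    exact LinearMap.mem_range_self f u
  set S := Submodule.span A {z : V ⊗[A] V | ∃ x y : V, z = x ⊗ₜ[A] y - y ⊗ₜ[A] x} with hS
  let q := symSqProj r (s ∘ₗ g)
  have hq_left : q ∘ₗ LinearMap.rTensor V f = LinearMap.id := by
    ext u v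
    simp [q, hrf, hgf]
  have hq_S (z : V ⊗[A] V) (hz : z ∈ S) : q z ∈ LinearMap.range α := by
    have hle : S ≤ (LinearMap.range α).comap q := by
      rw [hS, Submodule.span_le]
      rintro _ ⟨x, y, rfl⟩
      refine ⟨wedgeGen A U 2 ![r x, r y], ?_⟩
      rw [hα, hfr, hfr]
      simp only [q, map_sub, symSqProj_tmul, LinearMap.comp_apply, TensorProduct.tmul_sub]
      abel
    exact hle hz
  have hq_right : S.mkQ ∘ₗ LinearMap.rTensor V f ∘ₗ q =
      S.mkQ - S.mkQ ∘ₗ TensorProduct.map s s ∘ₗ TensorProduct.map g g := by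
    refine TensorProduct.ext' fun v v' => ?_
    have hcomm := SymSq.mk_tmul_comm (A := A) (v' - s (g v')) (s (g v))
    simp only [LinearMap.comp_apply, LinearMap.sub_apply, q, symSqProj_tmul, map_add,
      LinearMap.rTensor_tmul, hfr, TensorProduct.map_tmul, Submodule.mkQ_apply]
    rw [hcomm, ← Submodule.Quotient.mk_add, ← Submodule.Quotient.mk_sub]
    congr 1
    simp only [TensorProduct.sub_tmul, TensorProduct.tmul_sub]
    abel
  refine ⟨?_, ?_, ?_, ?_⟩
  · obtain ⟨β, hβ⟩ := exists_leftInverse_antisymmetrization A U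
    have hid := hβ (LinearMap.lTensor U r ∘ₗ α) fun x y => by simp [hα, hrf]
    exact Function.LeftInverse.injective (g := fun z => β (LinearMap.lTensor U r z))
      (LinearMap.congr_fun hid)
  · apply le_antisymm
    · intro z hz
      have hzS : LinearMap.rTensor V f z ∈ S := (Submodule.Quotient.mk_eq_zero S).mp hz
      simpa only [← LinearMap.comp_apply, hq_left, LinearMap.id_apply] using hq_S _ hzS
    · rw [LinearMap.range_le_ker_iff]
      refine exteriorPower.linearMap_ext (R := A) (n := 2) (M := U) (N := V ⊗[A] V ⧸ S) ?_
      ext v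
      have hvec : v = ![v 0, v 1] := by
        ext k; fin_cases k <;> rfl
      rw [hvec]
      change S.mkQ (LinearMap.rTensor V f (α (wedgeGen A U 2 ![v 0, v 1]))) = 0
      rw [hα, map_sub, map_sub, sub_eq_zero]
      exact SymSq.mk_tmul_comm _ _
  · apply le_antisymm
    · intro z hz
      obtain ⟨z, rfl⟩ := S.mkQ_surjective z
      refine ⟨q z, ?_⟩
      have hz' : symSqMap A W V s (symSqMap A V W g (S.mkQ z)) = 0 := by
        rw [LinearMap.mem_ker.mp hz, map_zero]
      have hzq := LinearMap.congr_fun hq_right z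
      rw [LinearMap.sub_apply] at hzq
      exact hzq.trans (sub_eq_self.mpr hz')
    · rw [LinearMap.range_le_ker_iff]
      refine TensorProduct.ext' fun u v => ?_
      change Submodule.Quotient.mk (g (f u) ⊗ₜ[A] g v) = 0
      rw [hgf, TensorProduct.zero_tmul, Submodule.Quotient.mk_zero]
  · intro z
    obtain ⟨z, rfl⟩ := Submodule.mkQ_surjective _ z
    obtain ⟨y, rfl⟩ := TensorProduct.map_surjective hsurj hsurj z
    exact ⟨S.mkQ y, rfl⟩
end
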